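/- arXiv:1410.3333 — 2 statements merged into one kernel-verified Lean document; each statement's English description precedes it below -/
import Mathlib

section
/- Suppose f satisfies the local condition. Then there exists a constant c_f > 0 such that (log x)·∏_{p ≤ x, p prime} (1 − ν₁(p)/(p − 1)) → c_f as x → ∞. -/
open Polynomial Filter

/-- ν₁(d) = #{a mod d : gcd(a,d) = 1 and f(a) ≡ 0 (mod d)} -/
def nu1 (f : Polynomial ℤ) (d : ℕ) : ℕ :=
  ((Finset.range d).filter (fun a : ℕ => Nat.gcd a d = 1 ∧ (d : ℤ) ∣ f.eval (a : ℤ))).card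

section Tauberian

variable {ι : Type*} {b l : ι → ℝ}

theorem summable_mul_of_bounded_on_unitInterval (hb : ∀ i, 0 ≤ b i) (hl : ∀ i, 0 ≤ l i) {δ : ℝ}
    (hδ : 0 < δ) (hs : Summable fun i => b i * Real.exp (-(δ * l i))) {g : ℝ → ℝ} {M : ℝ}
    (hg : ∀ x ∈ Set.Icc (0 : ℝ) 1, |g x| ≤ M * x) :
    Summable fun i => b i * g (Real.exp (-(δ * l i))) := by
  refine Summable.of_norm_bounded (hs.mul_left M) fun i => ?_
  have hx : Real.exp (-(δ * l i)) ∈ Set.Icc (0 : ℝ) 1 :=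
    ⟨(Real.exp_pos _).le, Real.exp_le_one_iff.2 (by nlinarith [hl i])⟩
  rw [Real.norm_eq_abs, abs_mul, abs_of_nonneg (hb i)]
  nlinarith [mul_le_mul_of_nonneg_left (hg _ hx) (hb i)]

theorem summable_mul_weight (hb : ∀ i, 0 ≤ b i) (hl : ∀ i, 0 ≤ l i) {δ : ℝ}
    (hδ : 0 < δ) (hs : Summable fun i => b i * Real.exp (-(δ * l i))) {r : ℝ → ℝ}
    (hr : ContinuousOn r (Set.Icc 0 1)) :
    Summable fun i => b i * (Real.exp (-(δ * l i)) * (1 - Real.exp (-(δ * l i))) *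
      r (Real.exp (-(δ * l i)))) := by
  obtain ⟨M, hM⟩ := isCompact_Icc.exists_bound_of_continuousOn hr
  refine summable_mul_of_bounded_on_unitInterval hb hl hδ hs (g := fun x => x * (1 - x) * r x)
    (M := M) fun x hx => ?_
  have h1 := hM x hx
  rw [Real.norm_eq_abs] at h1
  rw [abs_mul, abs_of_nonneg (mul_nonneg hx.1 (sub_nonneg.2 hx.2))]
  have hM0 := (abs_nonneg _).trans h1
  have h2 : x * (1 - x) ≤ x := by nlinarith [hx.1, hx.2]
  calc x * (1 - x) * |r x| ≤ x * |r x| := mul_le_mul_of_nonneg_right h2 (abs_nonneg _)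
    _ ≤ x * M := mul_le_mul_of_nonneg_left h1 hx.1
    _ = M * x := mul_comm _ _

/-- The limit of the weighted sums with a polynomial weight. -/
theorem exists_tendsto_polynomial_weight (hb : ∀ i, 0 ≤ b i) (hl : ∀ i, 0 ≤ l i)
    (hs : ∀ δ : ℝ, 0 < δ → Summable fun i => b i * Real.exp (-(δ * l i))) {C : ℝ}
    (hF : Tendsto (fun δ : ℝ => (∑' i, b i * Real.exp (-(δ * l i))) + Real.log δ)
      (nhdsWithin 0 (Set.Ioi 0)) (nhds C)) (R : ℝ[X]) :
    ∃ c, Tendsto (fun δ : ℝ => ∑' i, b i * (Real.exp (-(δ * l i)) * (1 - Real.exp (-(δ * l i))) *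
      R.eval (Real.exp (-(δ * l i))))) (nhdsWithin 0 (Set.Ioi 0)) (nhds c) := by
  induction R using Polynomial.induction_on' with
  | add p q hp hq =>
    obtain ⟨c, hc⟩ := hp
    obtain ⟨d, hd⟩ := hq
    refine ⟨c + d, (hc.add hd).congr' ?_⟩
    filter_upwards [self_mem_nhdsWithin] with δ (hδ : 0 < δ)
    rw [← (summable_mul_weight hb hl hδ (hs δ hδ) p.continuous.continuousOn).tsum_add
      (summable_mul_weight hb hl hδ (hs δ hδ) q.continuous.continuousOn)]
    refine tsum_congr fun i => ?_
    rw [eval_add]; ring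
  | monomial n a =>
    have key (k : ℕ) : Tendsto (fun δ : ℝ => (∑' i, b i * Real.exp (-(((k + 1 : ℝ) * δ) * l i)))
        + Real.log δ) (nhdsWithin 0 (Set.Ioi 0)) (nhds (C - Real.log (k + 1))) := by
      have hk : (0 : ℝ) < k + 1 := by positivity
      have h1 : Tendsto (fun δ : ℝ => (k + 1 : ℝ) * δ) (nhdsWithin 0 (Set.Ioi 0))
          (nhdsWithin 0 (Set.Ioi 0)) := by
        refine tendsto_nhdsWithin_iff.2 ⟨?_, ?_⟩
        · refine (Continuous.tendsto' (by fun_prop) 0 0 (by simp)).mono_left nhdsWithin_le_nhds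
        · filter_upwards [self_mem_nhdsWithin] with δ (hδ : 0 < δ)
          exact mul_pos hk hδ
      refine ((hF.comp h1).sub_const (Real.log (k + 1))).congr' ?_
      filter_upwards [self_mem_nhdsWithin] with δ (hδ : 0 < δ)
      simp only [Function.comp]
      rw [Real.log_mul hk.ne' hδ.ne']; ring
    refine ⟨_, (((key n).sub (key (n + 1))).const_mul a).congr' ?_⟩
    filter_upwards [self_mem_nhdsWithin] with δ (hδ : 0 < δ)
    have s1 := hs (((n : ℕ) + 1 : ℝ) * δ) (by positivity)
    have s2 := hs (((n + 1 : ℕ) + 1 : ℝ) * δ) (by positivity)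
    rw [add_sub_add_right_eq_sub, ← s1.tsum_sub s2, ← tsum_mul_left]
    refine tsum_congr fun i => ?_
    have e1 : Real.exp (-(((n : ℕ) + 1 : ℝ) * δ * l i)) = Real.exp (-(δ * l i)) ^ (n + 1) := by
      rw [← Real.exp_nat_mul]; push_cast; ring_nf
    have e2 : Real.exp (-(((n + 1 : ℕ) + 1 : ℝ) * δ * l i)) =
        Real.exp (-(δ * l i)) ^ (n + 2) := by
      rw [← Real.exp_nat_mul]; push_cast; ring_nf
    rw [e1, e2, eval_monomial]; ring

theorem eventually_weight_near_const (hb : ∀ i, 0 ≤ b i) (hl : ∀ i, 0 ≤ l i)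
    (hs : ∀ δ : ℝ, 0 < δ → Summable fun i => b i * Real.exp (-(δ * l i))) {C : ℝ}
    (hF : Tendsto (fun δ : ℝ => (∑' i, b i * Real.exp (-(δ * l i))) + Real.log δ)
      (nhdsWithin 0 (Set.Ioi 0)) (nhds C)) {r : ℝ → ℝ} (hr : ContinuousOn r (Set.Icc 0 1))
    {η : ℝ} (hη : 0 < η) :
    ∃ c, ∀ᶠ δ : ℝ in nhdsWithin 0 (Set.Ioi 0),
      |(∑' i, b i * (Real.exp (-(δ * l i)) * (1 - Real.exp (-(δ * l i))) *
        r (Real.exp (-(δ * l i))))) - c| ≤ η := by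
  obtain ⟨c₁, hc₁⟩ := exists_tendsto_polynomial_weight hb hl hs hF 1
  have hK : 0 < |c₁| + 1 := by positivity
  obtain ⟨R, hR⟩ := exists_polynomial_near_of_continuousOn 0 1 r hr (η / 2 / (|c₁| + 1))
    (by positivity)
  obtain ⟨c, hc⟩ := exists_tendsto_polynomial_weight hb hl hs hF R
  refine ⟨c, ?_⟩
  filter_upwards [self_mem_nhdsWithin, hc₁.eventually_lt_const
    (show c₁ < |c₁| + 1 by linarith [le_abs_self c₁]),
    hc.eventually (Metric.closedBall_mem_nhds c (half_pos hη))] with δ (hδ : 0 < δ) h1 h2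
  rw [Real.dist_eq] at h2
  have sr := summable_mul_weight hb hl hδ (hs δ hδ) hr
  have sR := summable_mul_weight hb hl hδ (hs δ hδ) R.continuous.continuousOn
  have s1 := summable_mul_weight hb hl hδ (hs δ hδ) (1 : ℝ[X]).continuous.continuousOn
  have hdiff : |(∑' i, b i * (Real.exp (-(δ * l i)) * (1 - Real.exp (-(δ * l i))) *
        r (Real.exp (-(δ * l i))))) - ∑' i, b i * (Real.exp (-(δ * l i)) *
        (1 - Real.exp (-(δ * l i))) * R.eval (Real.exp (-(δ * l i))))| ≤
      (η / 2 / (|c₁| + 1)) * (|c₁| + 1) := by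
    rw [← sr.tsum_sub sR, ← Real.norm_eq_abs]
    refine (tsum_of_norm_bounded (s1.mul_left (η / 2 / (|c₁| + 1))).hasSum fun i => ?_).trans ?_
    · have hx : Real.exp (-(δ * l i)) ∈ Set.Icc (0 : ℝ) 1 :=
        ⟨(Real.exp_pos _).le, Real.exp_le_one_iff.2 (by nlinarith [hl i])⟩
      have h3 := (hR _ hx).le
      set x := Real.exp (-(δ * l i))
      have h4 : 0 ≤ b i * (x * (1 - x)) :=
        mul_nonneg (hb i) (mul_nonneg hx.1 (sub_nonneg.2 hx.2))
      rw [show b i * (x * (1 - x) * r x) - b i * (x * (1 - x) * eval x R) =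
        b i * (x * (1 - x)) * -(eval x R - r x) by ring, Real.norm_eq_abs, abs_mul,
        abs_of_nonneg h4, abs_neg, eval_one]
      nlinarith [mul_le_mul_of_nonneg_left h3 h4]
    · rw [tsum_mul_left]
      exact mul_le_mul_of_nonneg_left h1.le (by positivity)
  rw [div_mul_cancel₀ _ hK.ne'] at hdiff
  calc _ ≤ _ := abs_sub_le _ (∑' i, b i * (Real.exp (-(δ * l i)) *
        (1 - Real.exp (-(δ * l i))) * R.eval (Real.exp (-(δ * l i))))) _
    _ ≤ η / 2 + η / 2 := add_le_add hdiff h2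
    _ = η := by ring

/-- A continuous cutoff which is `0` up to `exp (-(1 + ε))` and `1` from `exp (-1)` on. -/
theorem exists_cutoff {ε : ℝ} (hε : 0 < ε) :
    ∃ φ r : ℝ → ℝ, ContinuousOn r (Set.Icc 0 1) ∧
      (∀ x ∈ Set.Icc (0 : ℝ) 1, φ x = x + x * (1 - x) * r x) ∧ (∀ x, 0 ≤ φ x) ∧ (∀ x, φ x ≤ 1) ∧
      (∀ x, Real.exp (-1) ≤ x → φ x = 1) ∧ (∀ x, x ≤ Real.exp (-(1 + ε)) → φ x = 0) := by
  set A := Real.exp (-(1 + ε)) with hA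
  set B := Real.exp (-1) with hB
  have hA0 : 0 < A := Real.exp_pos _
  have hAB : A < B := Real.exp_lt_exp.2 (by linarith)
  have hB1 : B < 1 := by rw [hB, Real.exp_lt_one_iff]; norm_num
  have hBA : 0 < B - A := sub_pos.2 hAB
  set φ : ℝ → ℝ := fun x => max 0 (min 1 ((x - A) / (B - A))) with hφ
  have h1 : ∀ x, B ≤ x → φ x = 1 := fun x hx => by
    have : 1 ≤ (x - A) / (B - A) := by rw [le_div_iff₀ hBA]; linarith
    simp [hφ, min_eq_left this]
  have h0 : ∀ x, x ≤ A → φ x = 0 := fun x hx => by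
    have : (x - A) / (B - A) ≤ 0 := div_nonpos_of_nonpos_of_nonneg (by linarith) hBA.le
    exact max_eq_left ((min_le_right _ _).trans this)
  refine ⟨φ, fun x => φ x / max x A - (1 - φ x) / max (1 - x) (1 - B), ?_, ?_, fun x =>
    le_max_left _ _, fun x => max_le zero_le_one (min_le_left _ _), h1, h0⟩
  · have hc : Continuous φ := by fun_prop
    refine Continuous.continuousOn (Continuous.sub (hc.div (by fun_prop) fun x => ?_)
      (Continuous.div (by fun_prop) (by fun_prop) fun x => ?_))
    · exact (lt_max_of_lt_right hA0).ne'
    · exact (lt_max_of_lt_right (sub_pos.2 hB1)).ne'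
  · intro x hx
    rcases le_or_gt x A with hxA | hxA
    · have : max (1 - x) (1 - B) = 1 - x := max_eq_left (by linarith)
      have h2 : 1 - x ≠ 0 := by linarith
      simp only [h0 x hxA, this]
      field_simp
      ring
    · have e1 : max x A = x := max_eq_left hxA.le
      have hx0 : x ≠ 0 := by linarith
      rcases le_or_gt B x with hxB | hxB
      · simp only [h1 x hxB, e1]
        field_simp
        ring
      · have e2 : max (1 - x) (1 - B) = 1 - x := max_eq_left (by linarith)
        have h2 : 1 - x ≠ 0 := by linarith
        simp only [e1, e2]
        field_simp
        ring

/-- A Tauberian theorem of Karamata type with a logarithmic main term: for nonnegative weights,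
asymptotics of the Laplace transform at `0` give asymptotics of the partial sums. -/
theorem exists_tendsto_sum_sub_log (hb : ∀ i, 0 ≤ b i) (hl : ∀ i, 0 ≤ l i)
    (hs : ∀ δ : ℝ, 0 < δ → Summable fun i => b i * Real.exp (-(δ * l i))) {C : ℝ}
    (hF : Tendsto (fun δ : ℝ => (∑' i, b i * Real.exp (-(δ * l i))) + Real.log δ)
      (nhdsWithin 0 (Set.Ioi 0)) (nhds C)) :
    ∃ c, Tendsto (fun u : ℝ => (∑' i, {i | l i ≤ u}.indicator b i) - Real.log u)
      atTop (nhds c) := by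
  have main : ∀ ε : ℝ, 0 < ε → ∃ c, ∀ᶠ u : ℝ in atTop,
      |(∑' i, {i | l i ≤ u}.indicator b i) - Real.log u - c| ≤ ε := by
    intro ε hε
    have hε2 : 0 < ε / 2 := half_pos hε
    obtain ⟨φ, r, hr, hφr, hφ0, hφ1, hφB, hφA⟩ := exists_cutoff hε2
    obtain ⟨c, hc⟩ := eventually_weight_near_const hb hl hs hF hr (half_pos hε2)
    have hFe := hF.eventually (Metric.closedBall_mem_nhds C (half_pos hε2))
    have hx (δ : ℝ) (hδ : 0 < δ) (i : ι) : Real.exp (-(δ * l i)) ∈ Set.Icc (0 : ℝ) 1 :=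
      ⟨(Real.exp_pos _).le, Real.exp_le_one_iff.2 (by nlinarith [hl i])⟩
    have hsum (δ : ℝ) (hδ : 0 < δ) : Summable fun i => b i * φ (Real.exp (-(δ * l i))) := by
      refine ((hs δ hδ).add (summable_mul_weight hb hl hδ (hs δ hδ) hr)).congr fun i => ?_
      rw [hφr _ (hx δ hδ i)]; ring
    have hG : ∀ᶠ δ : ℝ in nhdsWithin 0 (Set.Ioi 0),
        |(∑' i, b i * φ (Real.exp (-(δ * l i)))) + Real.log δ - (C + c)| ≤ ε / 2 := by
      filter_upwards [self_mem_nhdsWithin, hc, hFe] with δ (hδ : 0 < δ) h1 h2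
      rw [Real.dist_eq] at h2
      have : (∑' i, b i * φ (Real.exp (-(δ * l i)))) = (∑' i, b i * Real.exp (-(δ * l i))) +
          ∑' i, b i * (Real.exp (-(δ * l i)) * (1 - Real.exp (-(δ * l i))) *
            r (Real.exp (-(δ * l i)))) := by
        rw [← (hs δ hδ).tsum_add (summable_mul_weight hb hl hδ (hs δ hδ) hr)]
        refine tsum_congr fun i => ?_
        rw [hφr _ (hx δ hδ i)]; ring
      rw [this]
      rw [abs_le] at h1 h2 ⊢
      constructor <;> linarith [h1.1, h1.2, h2.1, h2.2]
    have hlim (k : ℝ) (hk : 0 < k) : Tendsto (fun u : ℝ => k / u) atTop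
        (nhdsWithin 0 (Set.Ioi 0)) := by
      refine tendsto_nhdsWithin_iff.2 ⟨tendsto_const_nhds.div_atTop tendsto_id, ?_⟩
      filter_upwards [eventually_gt_atTop 0] with u hu
      exact div_pos hk hu
    refine ⟨C + c, ?_⟩
    filter_upwards [eventually_gt_atTop 0, (hlim 1 one_pos).eventually hG,
      (hlim (1 + ε / 2) (by positivity)).eventually hG] with u hu h1 h2
    have ho : 0 < 1 + ε / 2 := by positivity
    have hi (i : ι) : {i | l i ≤ u}.indicator b i ≤ b i * φ (Real.exp (-(1 / u * l i))) := by
      by_cases h : l i ≤ u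
      · rw [Set.indicator_of_mem (by exact h), hφB, mul_one]
        rw [Real.exp_le_exp, neg_le_neg_iff, one_div_mul_eq_div, div_le_one hu]
        exact h
      · rw [Set.indicator_of_notMem (by exact h)]
        exact mul_nonneg (hb i) (hφ0 _)
    have hn (i : ι) : 0 ≤ {i | l i ≤ u}.indicator b i := Set.indicator_nonneg (fun i _ => hb i) i
    have hS : Summable ({i | l i ≤ u}.indicator b) :=
      Summable.of_nonneg_of_le hn hi (hsum _ (by positivity))
    have hup := hS.tsum_le_tsum hi (hsum _ (by positivity))
    have hi' (i : ι) : b i * φ (Real.exp (-((1 + ε / 2) / u * l i))) ≤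
        {i | l i ≤ u}.indicator b i := by
      by_cases h : l i ≤ u
      · rw [Set.indicator_of_mem (by exact h)]
        exact mul_le_of_le_one_right (hb i) (hφ1 _)
      · rw [Set.indicator_of_notMem (by exact h), hφA, mul_zero]
        rw [Real.exp_le_exp, neg_le_neg_iff, div_mul_eq_mul_div, le_div_iff₀ hu]
        exact mul_le_mul_of_nonneg_left (not_le.1 h).le ho.le
    have hdown := (hsum _ (by positivity)).tsum_le_tsum hi' hS
    rw [Real.log_div one_ne_zero hu.ne', Real.log_one] at h1
    rw [Real.log_div ho.ne' hu.ne'] at h2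
    have hlog : Real.log (1 + ε / 2) ≤ ε / 2 := by
      linarith [Real.log_le_sub_one_of_pos ho]
    rw [abs_le] at h1 h2 ⊢
    constructor <;> linarith [h1.1, h1.2, h2.1, h2.2]
  refine cauchy_map_iff_exists_tendsto.1 (Metric.cauchy_iff.2 ⟨inferInstance, fun ε hε => ?_⟩)
  obtain ⟨c, hc⟩ := main (ε / 4) (by positivity)
  refine ⟨Metric.closedBall c (ε / 4), ?_, fun x hx y hy => ?_⟩
  · exact mem_map.2 (hc.mono fun u hu => by
      rwa [Metric.mem_closedBall, Real.dist_eq])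
  · have := dist_triangle_right x y c
    rw [Metric.mem_closedBall] at hx hy
    linarith

end Tauberian

theorem HasProd.hasSum_log_of_pos {ι : Type*} {g : ι → ℝ} {a : ℝ} (h : HasProd g a)
    (hg : ∀ i, 0 < g i) (ha : 0 < a) : HasSum (fun i => Real.log (g i)) (Real.log a) := by
  have := (Real.continuousAt_log ha.ne').tendsto.comp h
  refine this.congr fun s => ?_
  simp only [Function.comp]
  rw [Real.log_prod fun i _ => (hg i).ne']

theorem Nat.Primes.rpow_neg_pow_le {s : ℝ} (hs : 1 ≤ s) (p : Nat.Primes) (e : ℕ) :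
    ((p ^ e : ℕ) : ℝ) ^ (-s) ≤ ((p : ℝ)⁻¹) ^ e := by
  have hp : (1 : ℝ) ≤ ((p ^ e : ℕ) : ℝ) := by exact_mod_cast Nat.one_le_pow _ _ p.2.pos
  calc ((p ^ e : ℕ) : ℝ) ^ (-s) ≤ ((p ^ e : ℕ) : ℝ) ^ (-1 : ℝ) :=
        Real.rpow_le_rpow_of_exponent_le hp (by linarith)
    _ = ((p : ℝ)⁻¹) ^ e := by rw [Real.rpow_neg_one]; push_cast; rw [inv_pow]

section EulerFactor

variable {a : ℕ → ℝ} {D : ℕ}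

theorem summable_add_three_pow_mul_two_inv_pow (D : ℕ) :
    Summable fun e : ℕ => ((e : ℝ) + 3) ^ D * (2 : ℝ)⁻¹ ^ e := by
  have h := (summable_pow_mul_geometric_of_norm_lt_one D
    (r := (2 : ℝ)⁻¹) (by norm_num))
  have h2 := ((summable_nat_add_iff 3).2 h).mul_left 8
  refine h2.congr fun e => ?_
  push_cast
  rw [pow_add]; ring

/-- The tail of the local factor, as a bound for the terms with exponent at least two. -/
theorem eulerFactor_term_le
    (hbd : ∀ (p : Nat.Primes) (e : ℕ), a (p ^ e) ≤ ((e : ℝ) + 1) ^ D) {s : ℝ} (hs : 1 ≤ s)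
    (p : Nat.Primes) (e : ℕ) :
    a (p ^ (e + 2)) * ((p ^ (e + 2) : ℕ) : ℝ) ^ (-s) ≤
      ((p : ℝ)⁻¹) ^ 2 * (((e : ℝ) + 3) ^ D * (2 : ℝ)⁻¹ ^ e) := by
  have hp : (2 : ℝ) ≤ p := by exact_mod_cast p.2.two_le
  have h1 := hbd p (e + 2)
  have h2 := p.rpow_neg_pow_le hs (e + 2)
  have h3 : ((p : ℝ)⁻¹) ^ e ≤ (2 : ℝ)⁻¹ ^ e :=
    pow_le_pow_left₀ (by positivity) (inv_anti₀ (by norm_num) hp) e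
  calc _ ≤ (((e + 2 : ℕ) : ℝ) + 1) ^ D * ((p : ℝ)⁻¹) ^ (e + 2) :=
        mul_le_mul h1 h2 (by positivity) (by positivity)
    _ = ((p : ℝ)⁻¹) ^ 2 * (((e : ℝ) + 3) ^ D * ((p : ℝ)⁻¹) ^ e) := by
        push_cast; ring
    _ ≤ _ := by gcongr

theorem summable_eulerFactor (ha : ∀ n, 0 ≤ a n)
    (hbd : ∀ (p : Nat.Primes) (e : ℕ), a (p ^ e) ≤ ((e : ℝ) + 1) ^ D) {s : ℝ} (hs : 1 ≤ s)
    (p : Nat.Primes) : Summable fun e : ℕ => a (p ^ e) * ((p ^ e : ℕ) : ℝ) ^ (-s) := by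
  refine (summable_nat_add_iff 2).1 ?_
  exact Summable.of_nonneg_of_le (fun e => mul_nonneg (ha _) (by positivity))
    (fun e => eulerFactor_term_le hbd hs p e)
    ((summable_add_three_pow_mul_two_inv_pow D).mul_left _)

theorem abs_log_one_add_sub_le {x y t : ℝ} (hx : 0 ≤ x) (ht : 0 ≤ t) (h : y = x + t) :
    |Real.log (1 + y) - x| ≤ t + y ^ 2 := by
  have hy : 0 ≤ y := by linarith
  have h1 : Real.log (1 + y) ≤ y := by linarith [Real.log_le_sub_one_of_pos (x := 1 + y) (by linarith)]
  have h2 : y - y ^ 2 ≤ Real.log (1 + y) := by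
    have h3 := Real.one_sub_inv_le_log_of_pos (x := 1 + y) (by linarith)
    have h4 : y - y ^ 2 ≤ 1 - (1 + y)⁻¹ := by
      have : 1 - (1 + y)⁻¹ = y / (1 + y) := by field_simp; ring
      rw [this, le_div_iff₀ (by linarith)]
      nlinarith [pow_nonneg hy 3]
    linarith
  rw [abs_le]
  constructor <;> nlinarith [sq_nonneg y]

/-- The logarithm of a local factor agrees with its linear term up to `O(p⁻²)`, uniformly. -/
theorem exists_abs_log_eulerFactor_sub_le (ha : ∀ n, 0 ≤ a n) (ha1 : a 1 = 1)
    (hbd : ∀ (p : Nat.Primes) (e : ℕ), a (p ^ e) ≤ ((e : ℝ) + 1) ^ D) :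
    ∃ B : ℝ, ∀ s : ℝ, 1 ≤ s → ∀ p : Nat.Primes,
      |Real.log (∑' e : ℕ, a (p ^ e) * ((p ^ e : ℕ) : ℝ) ^ (-s)) - a p * (p : ℝ) ^ (-s)| ≤
        B * ((p : ℝ)⁻¹) ^ 2 := by
  set T : ℝ := ∑' e : ℕ, ((e : ℝ) + 3) ^ D * (2 : ℝ)⁻¹ ^ e with hT
  have hT0 : 0 ≤ T := tsum_nonneg fun e => by positivity
  refine ⟨T + (2 ^ D + T) ^ 2, fun s hs p => ?_⟩
  have hsum := summable_eulerFactor ha hbd hs p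
  have hsplit := hsum.sum_add_tsum_nat_add 2
  set t := ∑' e : ℕ, a (p ^ (e + 2)) * ((p ^ (e + 2) : ℕ) : ℝ) ^ (-s) with ht
  have ht0 : 0 ≤ t := tsum_nonneg fun e => mul_nonneg (ha _) (by positivity)
  have htT : t ≤ ((p : ℝ)⁻¹) ^ 2 * T := by
    rw [hT, ← tsum_mul_left]
    exact ((summable_nat_add_iff 2).2 hsum).tsum_le_tsum
      (fun e => eulerFactor_term_le hbd hs p e)
      ((summable_add_three_pow_mul_two_inv_pow D).mul_left _)
  rw [← hsplit]
  simp only [Finset.sum_range_succ, Finset.sum_range_zero, pow_zero, pow_one, ha1, Nat.cast_one,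
    Real.one_rpow, zero_add, mul_one]
  have hx0 : 0 ≤ a p * (p : ℝ) ^ (-s) := mul_nonneg (ha _) (by positivity)
  have hx1 : a p * (p : ℝ) ^ (-s) ≤ 2 ^ D * (p : ℝ)⁻¹ := by
    have h1 := hbd p 1
    have h2 := p.rpow_neg_pow_le hs 1
    simp only [pow_one, Nat.cast_one] at h1 h2
    calc _ ≤ ((1 : ℝ) + 1) ^ D * (p : ℝ)⁻¹ := mul_le_mul h1 h2 (by positivity) (by positivity)
      _ = _ := by norm_num
  rw [add_assoc]
  refine (abs_log_one_add_sub_le hx0 ht0 rfl).trans ?_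
  have hp1 : (p : ℝ)⁻¹ ≤ 1 := inv_le_one_of_one_le₀ (by exact_mod_cast p.2.one_le)
  have hp0 : 0 ≤ (p : ℝ)⁻¹ := by positivity
  have hy : a p * (p : ℝ) ^ (-s) + t ≤ (2 ^ D + T) * (p : ℝ)⁻¹ := by
    nlinarith [mul_le_mul_of_nonneg_left (mul_le_mul_of_nonneg_left hp1 hp0) hT0]
  have := pow_le_pow_left₀ (add_nonneg hx0 ht0) hy 2
  rw [mul_pow] at this
  linarith

theorem tendsto_eulerFactor (ha : ∀ n, 0 ≤ a n)
    (hbd : ∀ (p : Nat.Primes) (e : ℕ), a (p ^ e) ≤ ((e : ℝ) + 1) ^ D) (p : Nat.Primes) :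
    Tendsto (fun s : ℝ => ∑' e : ℕ, a (p ^ e) * ((p ^ e : ℕ) : ℝ) ^ (-s))
      (nhdsWithin 1 (Set.Ioi 1)) (nhds (∑' e : ℕ, a (p ^ e) * ((p ^ e : ℕ) : ℝ) ^ (-(1 : ℝ)))) := by
  refine tendsto_tsum_of_dominated_convergence (summable_eulerFactor ha hbd le_rfl p)
    (fun e => ?_) ?_
  · have hp : (0 : ℝ) < ((p ^ e : ℕ) : ℝ) := by exact_mod_cast Nat.pow_pos p.2.pos
    have : Continuous fun s : ℝ => a (p ^ e) * ((p ^ e : ℕ) : ℝ) ^ (-s) :=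
      continuous_const.mul (continuous_const.rpow continuous_neg fun s => Or.inl hp.ne')
    exact (this.tendsto 1).mono_left nhdsWithin_le_nhds
  · filter_upwards [self_mem_nhdsWithin] with s (hs : 1 < s) e
    have hp : (1 : ℝ) ≤ ((p ^ e : ℕ) : ℝ) := by exact_mod_cast Nat.one_le_pow _ _ p.2.pos
    rw [Real.norm_eq_abs, abs_of_nonneg (mul_nonneg (ha _) (by positivity))]
    exact mul_le_mul_of_nonneg_left
      (Real.rpow_le_rpow_of_exponent_le hp (by linarith)) (ha _)

theorem Nat.Primes.summable_inv_sq : Summable fun p : Nat.Primes => ((p : ℝ)⁻¹) ^ 2 := by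
  have h : Summable fun n : ℕ => ((n : ℝ)⁻¹) ^ 2 := by
    simp [inv_pow]
  exact h.comp_injective Subtype.val_injective

/-- For a multiplicative sequence whose Dirichlet series has a simple pole at `1`, the sum over
primes has a logarithmic singularity at `1`. -/
theorem exists_tendsto_sum_primes_add_log (ha : ∀ n, 0 ≤ a n) (ha0 : a 0 = 0) (ha1 : a 1 = 1)
    (hmul : ∀ m n : ℕ, m.Coprime n → a (m * n) = a m * a n)
    (hbd : ∀ (p : Nat.Primes) (e : ℕ), a (p ^ e) ≤ ((e : ℝ) + 1) ^ D)
    (hsum : ∀ s : ℝ, 1 < s → Summable fun n : ℕ => a n * (n : ℝ) ^ (-s))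
    {κ : ℝ} (hκ : 0 < κ)
    (hres : Tendsto (fun s : ℝ => (s - 1) * ∑' n : ℕ, a n * (n : ℝ) ^ (-s))
      (nhdsWithin 1 (Set.Ioi 1)) (nhds κ)) :
    ∃ C, Tendsto (fun s : ℝ => (∑' p : Nat.Primes, a p * (p : ℝ) ^ (-s)) + Real.log (s - 1))
      (nhdsWithin 1 (Set.Ioi 1)) (nhds C) := by
  set E : ℝ → Nat.Primes → ℝ := fun s p => ∑' e : ℕ, a (p ^ e) * ((p ^ e : ℕ) : ℝ) ^ (-s) with hE
  have hEone (s : ℝ) (hs : 1 ≤ s) (p : Nat.Primes) : 1 ≤ E s p := by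
    have h := (summable_eulerFactor ha hbd hs p).le_tsum 0 fun e _ =>
      mul_nonneg (ha _) (by positivity)
    simp only [pow_zero, ha1, Nat.cast_one, Real.one_rpow, mul_one] at h
    exact h
  have hlog (s : ℝ) (hs : 1 < s) : HasSum (fun p => Real.log (E s p))
      (Real.log (∑' n : ℕ, a n * (n : ℝ) ^ (-s))) := by
    have hnorm : Summable fun n : ℕ => ‖a n * (n : ℝ) ^ (-s)‖ := by
      simpa only [Real.norm_eq_abs] using (hsum s hs).abs
    have hprod := EulerProduct.eulerProduct_hasProd (f := fun n : ℕ => a n * (n : ℝ) ^ (-s))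
      (by simp [ha1]) (fun {m n} hmn => by
        simp only [hmul m n hmn]
        push_cast
        rw [Real.mul_rpow (by positivity) (by positivity)]; ring) hnorm (by simp [ha0])
    refine hprod.hasSum_log_of_pos (fun p => one_pos.trans_le (hEone s hs.le p)) ?_
    refine one_pos.trans_le ?_
    have h := (hsum s hs).le_tsum 1 fun e _ => mul_nonneg (ha _) (by positivity)
    simpa [ha1] using h
  obtain ⟨B, hB⟩ := exists_abs_log_eulerFactor_sub_le ha ha1 hbd
  have hcorr : Tendsto (fun s : ℝ => ∑' p : Nat.Primes, (Real.log (E s p) - a p * (p : ℝ) ^ (-s)))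
      (nhdsWithin 1 (Set.Ioi 1))
      (nhds (∑' p : Nat.Primes, (Real.log (E 1 p) - a p * (p : ℝ) ^ (-(1 : ℝ))))) := by
    refine tendsto_tsum_of_dominated_convergence (Nat.Primes.summable_inv_sq.mul_left B)
      (fun p => ?_) ?_
    · refine ((tendsto_eulerFactor ha hbd p).log
        (one_pos.trans_le (hEone 1 le_rfl p)).ne').sub ?_
      have hp : (0 : ℝ) < p := by exact_mod_cast p.2.pos
      have : Continuous fun s : ℝ => a p * (p : ℝ) ^ (-s) :=
        continuous_const.mul (continuous_const.rpow continuous_neg fun s => Or.inl hp.ne')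
      exact (this.tendsto 1).mono_left nhdsWithin_le_nhds
    · filter_upwards [self_mem_nhdsWithin] with s (hs : 1 < s) p
      exact hB s hs.le p
  refine ⟨_, ((hres.log hκ.ne').sub hcorr).congr' ?_⟩
  filter_upwards [self_mem_nhdsWithin] with s (hs : 1 < s)
  have hps : Summable fun p : Nat.Primes => a p * (p : ℝ) ^ (-s) :=
    (hsum s hs).comp_injective Subtype.val_injective
  have hz : (∑' n : ℕ, a n * (n : ℝ) ^ (-s)) ≠ 0 := by
    have h := (hsum s hs).le_tsum 1 fun e _ => mul_nonneg (ha _) (by positivity)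
    have h1 : (1 : ℝ) ≤ ∑' n : ℕ, a n * (n : ℝ) ^ (-s) := by simpa [ha1] using h
    linarith
  rw [(hlog s hs).summable.tsum_sub hps, (hlog s hs).tsum_eq,
    Real.log_mul (sub_pos.2 hs).ne' hz]
  ring

/-- Mertens' theorem for the primes weighted by a sequence whose Dirichlet series has a simple
pole. -/
theorem exists_tendsto_weighted_mertens (ha : ∀ n, 0 ≤ a n) (ha0 : a 0 = 0) (ha1 : a 1 = 1)
    (hmul : ∀ m n : ℕ, m.Coprime n → a (m * n) = a m * a n)
    (hbd : ∀ (p : Nat.Primes) (e : ℕ), a (p ^ e) ≤ ((e : ℝ) + 1) ^ D)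
    (hsum : ∀ s : ℝ, 1 < s → Summable fun n : ℕ => a n * (n : ℝ) ^ (-s))
    {κ : ℝ} (hκ : 0 < κ)
    (hres : Tendsto (fun s : ℝ => (s - 1) * ∑' n : ℕ, a n * (n : ℝ) ^ (-s))
      (nhdsWithin 1 (Set.Ioi 1)) (nhds κ))
    {w : ℕ → ℝ} (hw : ∀ p : ℕ, p.Prime → 0 ≤ w p)
    (hwa : Summable fun p : Nat.Primes => |w p - a p / p|) :
    ∃ c, Tendsto (fun x : ℝ => (∑ p ∈ (Finset.range (⌊x⌋₊ + 1)).filter Nat.Prime, w p) -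
      Real.log (Real.log x)) atTop (nhds c) := by
  obtain ⟨C, hC⟩ := exists_tendsto_sum_primes_add_log ha ha0 ha1 hmul hbd hsum hκ hres
  have hexp (δ : ℝ) (p : Nat.Primes) : Real.exp (-(δ * Real.log p)) = (p : ℝ) ^ (-δ) := by
    rw [Real.rpow_def_of_pos (by exact_mod_cast p.2.pos)]; ring_nf
  have hp1 (p : Nat.Primes) : (1 : ℝ) ≤ p := by exact_mod_cast p.2.one_le
  have hle (δ : ℝ) (hδ : 0 < δ) (p : Nat.Primes) : (p : ℝ) ^ (-δ) ≤ 1 :=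
    Real.rpow_le_one_of_one_le_of_nonpos (hp1 p) (by linarith)
  have hdec (δ : ℝ) (p : Nat.Primes) : w p * Real.exp (-(δ * Real.log p)) =
      a p * (p : ℝ) ^ (-(1 + δ)) + (w p - a p / p) * (p : ℝ) ^ (-δ) := by
    have hp0 : (0 : ℝ) < p := one_pos.trans_le (hp1 p)
    rw [hexp, neg_add, Real.rpow_add hp0, Real.rpow_neg_one]
    ring
  have h1 (δ : ℝ) (hδ : 0 < δ) : Summable fun p : Nat.Primes => a p * (p : ℝ) ^ (-(1 + δ)) :=
    (hsum (1 + δ) (by linarith)).comp_injective Subtype.val_injective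
  have hbound (δ : ℝ) (hδ : 0 < δ) (p : Nat.Primes) :
      ‖(w p - a p / p) * (p : ℝ) ^ (-δ)‖ ≤ |w p - a p / p| := by
    rw [Real.norm_eq_abs, abs_mul, abs_of_nonneg (a := (p : ℝ) ^ (-δ)) (by positivity)]
    exact mul_le_of_le_one_right (abs_nonneg _) (hle δ hδ p)
  have h2 (δ : ℝ) (hδ : 0 < δ) : Summable fun p : Nat.Primes =>
      (w p - a p / p) * (p : ℝ) ^ (-δ) := Summable.of_norm_bounded hwa (hbound δ hδ)
  have hcorr : Tendsto (fun δ : ℝ => ∑' p : Nat.Primes, (w p - a p / p) * (p : ℝ) ^ (-δ))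
      (nhdsWithin 0 (Set.Ioi 0)) (nhds (∑' p : Nat.Primes, (w p - a p / p) * (p : ℝ) ^ (-(0 : ℝ)))) := by
    refine tendsto_tsum_of_dominated_convergence hwa (fun p => ?_) ?_
    · have : Continuous fun δ : ℝ => (w p - a p / p) * (p : ℝ) ^ (-δ) :=
        continuous_const.mul (continuous_const.rpow continuous_neg fun s =>
          Or.inl (one_pos.trans_le (hp1 p)).ne')
      exact (this.tendsto 0).mono_left nhdsWithin_le_nhds
    · filter_upwards [self_mem_nhdsWithin] with δ (hδ : 0 < δ) p
      exact hbound δ hδ p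
  have hshift : Tendsto (fun δ : ℝ => 1 + δ) (nhdsWithin 0 (Set.Ioi 0))
      (nhdsWithin 1 (Set.Ioi 1)) := by
    refine tendsto_nhdsWithin_iff.2 ⟨?_, ?_⟩
    · exact (Continuous.tendsto' (by fun_prop) 0 1 (by simp)).mono_left nhdsWithin_le_nhds
    · filter_upwards [self_mem_nhdsWithin] with δ (hδ : 0 < δ)
      exact lt_add_of_pos_right 1 hδ
  obtain ⟨c, hc⟩ := exists_tendsto_sum_sub_log (ι := Nat.Primes) (b := fun p => w p)
    (l := fun p => Real.log p) (fun p => hw p p.2) (fun p => Real.log_nonneg (hp1 p))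
    (fun δ hδ => ((h1 δ hδ).add (h2 δ hδ)).congr fun p => (hdec δ p).symm)
    (((hC.comp hshift).add hcorr).congr' (by
      filter_upwards [self_mem_nhdsWithin] with δ (hδ : 0 < δ)
      simp only [Function.comp, hdec]
      rw [(h1 δ hδ).tsum_add (h2 δ hδ), add_sub_cancel_left]
      ring))
  refine ⟨c, (hc.comp Real.tendsto_log_atTop).congr' ?_⟩
  filter_upwards [eventually_gt_atTop 0] with x hx
  simp only [Function.comp]
  congr 1
  have hset : ∀ n : ℕ, n ∈ (Finset.range (⌊x⌋₊ + 1)).filter Nat.Prime ↔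
      n.Prime ∧ Real.log n ≤ Real.log x := by
    intro n
    rw [Finset.mem_filter, Finset.mem_range, Nat.lt_succ_iff, and_comm]
    refine and_congr_right fun hn => ?_
    rw [Nat.le_floor_iff hx.le, Real.log_le_log_iff (by exact_mod_cast hn.pos) hx]
  set S : Set ℕ := {n : ℕ | n.Prime ∧ Real.log n ≤ Real.log x} with hS
  have hfin : ∑' n, S.indicator w n =
      ∑ n ∈ (Finset.range (⌊x⌋₊ + 1)).filter Nat.Prime, w n := by
    rw [tsum_eq_sum (s := (Finset.range (⌊x⌋₊ + 1)).filter Nat.Prime)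
      (fun n hn => Set.indicator_of_notMem (s := S) (fun h => hn ((hset n).2 h)) w)]
    exact Finset.sum_congr rfl fun n hn => Set.indicator_of_mem (s := S) ((hset n).1 hn) w
  rw [← hfin]
  have hext : ∀ n : ℕ, S.indicator w n =
      {n : ℕ | n.Prime}.indicator ({n : ℕ | Real.log n ≤ Real.log x}.indicator w) n := fun n => by
    rw [Set.indicator_indicator]; rfl
  rw [tsum_congr hext, ← tsum_subtype {n : ℕ | n.Prime}]
  rfl

end EulerFactor

section IdealCount

open NumberField Ideal

variable {K : Type*} [Field K] [NumberField K]

theorem Ideal.eq_mul_sup_span_natCast {m n : ℕ} (h : m.Coprime n) {I J : Ideal (𝓞 K)}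
    (hI : absNorm I = m) (hJ : absNorm J = n) : I = I * J ⊔ span {(m : 𝓞 K)} := by
  have hmI : (m : 𝓞 K) ∈ I := hI ▸ absNorm_mem I
  have hnJ : (n : 𝓞 K) ∈ J := hJ ▸ absNorm_mem J
  refine le_antisymm (fun x hx => ?_) (sup_le Ideal.mul_le_left ((span_singleton_le_iff_mem _).2 hmI))
  obtain ⟨u, v, huv⟩ := Nat.isCoprime_iff_coprime.2 h
  have h1 : x = x * (v * n) + u * x * m := by
    have : (u : 𝓞 K) * m + v * n = 1 := by exact_mod_cast congrArg (Int.cast : ℤ → 𝓞 K) huv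
    linear_combination -x * this
  rw [h1]
  exact Submodule.add_mem_sup (mul_mem_mul hx (J.mul_mem_left _ hnJ))
    (mem_span_singleton'.2 ⟨_, rfl⟩)

theorem Ideal.absNorm_sup_span_natCast_coprime {m n : ℕ} (h : m.Coprime n) (L : Ideal (𝓞 K)) :
    (absNorm (L ⊔ span {(m : 𝓞 K)})).Coprime n := by
  have h1 : absNorm (L ⊔ span {(m : 𝓞 K)}) ∣ absNorm (span {(m : 𝓞 K)}) :=
    absNorm_dvd_absNorm_of_le le_sup_right
  rw [absNorm_span_natCast] at h1
  exact Nat.Coprime.coprime_dvd_left h1 (h.pow_left _)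

theorem Ideal.sup_span_mul_sup_span {m n : ℕ} (h : m.Coprime n) {L : Ideal (𝓞 K)}
    (hL : absNorm L = m * n) :
    (L ⊔ span {(m : 𝓞 K)}) * (L ⊔ span {(n : 𝓞 K)}) = L := by
  have hmn : ((m * n : ℕ) : 𝓞 K) ∈ L := hL ▸ absNorm_mem L
  apply le_antisymm
  · rw [sup_mul, mul_sup (span _), span_singleton_mul_span_singleton]
    refine sup_le Ideal.mul_le_left (sup_le Ideal.mul_le_right ?_)
    rw [span_singleton_le_iff_mem]
    exact_mod_cast hmn
  · intro x hx
    obtain ⟨u, v, huv⟩ := Nat.isCoprime_iff_coprime.2 h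
    have h1 : x = (u * m) * x + x * (v * n) := by
      have : (u : 𝓞 K) * m + v * n = 1 := by exact_mod_cast congrArg (Int.cast : ℤ → 𝓞 K) huv
      linear_combination -x * this
    rw [h1]
    exact add_mem
      (mul_mem_mul (mul_mem_left _ _ (le_sup_right (a := L) (mem_span_singleton_self _)))
        (le_sup_left (b := span {(n : 𝓞 K)}) hx))
      (mul_mem_mul (le_sup_left (b := span {(m : 𝓞 K)}) hx)
        (mul_mem_left _ _ (le_sup_right (a := L) (mem_span_singleton_self _))))

theorem Ideal.natCard_absNorm_eq_mul {m n : ℕ} (h : m.Coprime n) :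
    Nat.card {I : Ideal (𝓞 K) // absNorm I = m * n} =
      Nat.card {I : Ideal (𝓞 K) // absNorm I = m} *
        Nat.card {I : Ideal (𝓞 K) // absNorm I = n} := by
  rw [← Nat.card_prod]
  symm
  refine Nat.card_congr (Equiv.ofBijective
    (fun P => ⟨P.1.1 * P.2.1, by rw [map_mul, P.1.2, P.2.2]⟩) ⟨?_, ?_⟩)
  · rintro ⟨⟨I, hI⟩, J, hJ⟩ ⟨⟨I', hI'⟩, J', hJ'⟩ he
    have he : I * J = I' * J' := congrArg Subtype.val he
    have h1 : I = I' := by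
      rw [eq_mul_sup_span_natCast h hI hJ, he, ← eq_mul_sup_span_natCast h hI' hJ']
    have h2 : J = J' := by
      rw [eq_mul_sup_span_natCast h.symm hJ hI, mul_comm, he, mul_comm,
        ← eq_mul_sup_span_natCast h.symm hJ' hI']
    subst h1 h2
    rfl
  · rintro ⟨L, hL⟩
    have hmul := sup_span_mul_sup_span h hL
    have hN : absNorm (L ⊔ span {(m : 𝓞 K)}) * absNorm (L ⊔ span {(n : 𝓞 K)}) = m * n := by
      rw [← map_mul, hmul, hL]
    have c1 := absNorm_sup_span_natCast_coprime h L
    have c2 := absNorm_sup_span_natCast_coprime h.symm L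
    have e1 : absNorm (L ⊔ span {(m : 𝓞 K)}) = m := Nat.dvd_antisymm
      (c1.dvd_of_dvd_mul_right (hN ▸ dvd_mul_right _ _))
      (c2.symm.dvd_of_dvd_mul_right (hN ▸ dvd_mul_right _ _))
    have e2 : absNorm (L ⊔ span {(n : 𝓞 K)}) = n := Nat.dvd_antisymm
      (c2.dvd_of_dvd_mul_left (hN ▸ dvd_mul_left _ _))
      (c1.symm.dvd_of_dvd_mul_left (hN ▸ dvd_mul_left _ _))
    exact ⟨⟨⟨_, e1⟩, ⟨_, e2⟩⟩, Subtype.ext hmul⟩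

omit [NumberField K] in
theorem Ideal.mem_primesOver_span_natCast_iff {p : ℕ} (hp : p.Prime) {P : Ideal (𝓞 K)} :
    P ∈ primesOver (span {(p : ℤ)}) (𝓞 K) ↔ P.IsPrime ∧ (p : 𝓞 K) ∈ P := by
  have : Fact p.Prime := ⟨hp⟩
  have hmax := Int.ideal_span_isMaximal_of_prime p
  refine and_congr_right fun hP => ⟨fun h => ?_, fun h => ⟨?_⟩⟩
  · have : (p : ℤ) ∈ P.under ℤ := h.over ▸ mem_span_singleton_self _
    simpa [mem_comap] using this
  · refine hmax.eq_of_le (hP.under ℤ).ne_top ?_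
    rw [span_singleton_le_iff_mem]
    simpa [mem_comap] using h

theorem Ideal.card_primesOver_le_finrank {p : ℕ} (hp : p.Prime)
    [Fintype (primesOver (span {(p : ℤ)}) (𝓞 K))] :
    Fintype.card (primesOver (span {(p : ℤ)}) (𝓞 K)) ≤ Module.finrank ℚ K := by
  have : Fact p.Prime := ⟨hp⟩
  have hmax := Int.ideal_span_isMaximal_of_prime p
  rw [← RingOfIntegers.rank K, ← sum_ramification_inertia_eq_finrank (span {(p : ℤ)}) (𝓞 K),
    ← Finset.card_univ, Finset.card_eq_sum_ones]
  refine Finset.sum_le_sum fun P _ => ?_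
  have := P.2.1
  have := P.2.2
  exact Nat.mul_pos (ramificationIdx_pos ..) (inertiaDeg_pos ..)

theorem Ideal.natCard_absNorm_eq_prime_pow_le {p : ℕ} (hp : p.Prime) (e : ℕ) :
    Nat.card {I : Ideal (𝓞 K) // absNorm I = p ^ e} ≤ (e + 1) ^ Module.finrank ℚ K := by
  classical
  have : Fact p.Prime := ⟨hp⟩
  have hmax := Int.ideal_span_isMaximal_of_prime p
  have hfin : (primesOver (span {(p : ℤ)}) (𝓞 K)).Finite :=
    Algebra.QuasiFinite.finite_primesOver (S := 𝓞 K) (span {(p : ℤ)})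
  have := hfin.fintype
  have hne : ∀ I : {I : Ideal (𝓞 K) // absNorm I = p ^ e}, I.1 ≠ ⊥ := fun I h => by
    have := I.2
    rw [h, absNorm_bot] at this
    exact (pow_pos hp.pos e).ne this
  have hle : ∀ (I : {I : Ideal (𝓞 K) // absNorm I = p ^ e})
      (P : primesOver (span {(p : ℤ)}) (𝓞 K)),
      (UniqueFactorizationMonoid.normalizedFactors I.1).count P.1 < e + 1 := by
    intro I P
    obtain ⟨hP, hpP⟩ := (mem_primesOver_span_natCast_iff hp).1 P.2
    have h1 : P.1 ^ (UniqueFactorizationMonoid.normalizedFactors I.1).count P.1 ∣ I.1 := by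
      rw [← Multiset.prod_replicate]
      refine dvd_trans (Multiset.prod_dvd_prod_of_le (Multiset.le_count_iff_replicate_le.1 le_rfl))
        (UniqueFactorizationMonoid.prod_normalizedFactors (hne I)).dvd
    have h2 : p ∣ absNorm P.1 := by
      have h3 : absNorm P.1 ∣ p ^ Module.finrank ℤ (𝓞 K) := by
        rw [← absNorm_span_natCast]
        exact absNorm_dvd_absNorm_of_le ((span_singleton_le_iff_mem _).2 hpP)
      obtain ⟨k, -, hk⟩ := (Nat.dvd_prime_pow hp).1 h3
      rw [hk]
      refine dvd_pow_self p ?_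
      rintro rfl
      exact hP.ne_top (absNorm_eq_one_iff.1 (by simpa using hk))
    have h4 := (pow_dvd_pow_of_dvd h2 _).trans ((map_pow absNorm P.1 _).symm.dvd.trans
      ((map_dvd absNorm h1).trans I.2.dvd))
    exact Nat.lt_succ_of_le ((Nat.pow_dvd_pow_iff_le_right hp.one_lt).1 h4)
  calc _ ≤ Nat.card (primesOver (span {(p : ℤ)}) (𝓞 K) → Fin (e + 1)) := by
        refine Nat.card_le_card_of_injective (fun I P => ⟨_, hle I P⟩) fun I J hIJ => ?_
        refine Subtype.ext ?_
        rw [← associated_iff_eq,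
          UniqueFactorizationMonoid.associated_iff_normalizedFactors_eq_normalizedFactors
            (hne I) (hne J)]
        have hover : ∀ (I : {I : Ideal (𝓞 K) // absNorm I = p ^ e}),
            ∀ P ∈ UniqueFactorizationMonoid.normalizedFactors I.1,
              P ∈ primesOver (span {(p : ℤ)}) (𝓞 K) := by
          intro I P hP
          rw [mem_primesOver_span_natCast_iff hp]
          have hPp := isPrime_of_prime (UniqueFactorizationMonoid.prime_of_normalized_factor P hP)
          refine ⟨hPp, hPp.mem_of_pow_mem e ?_⟩
          have := le_of_dvd (UniqueFactorizationMonoid.dvd_of_mem_normalizedFactors hP)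
            (absNorm_mem I.1)
          rw [I.2] at this
          exact_mod_cast this
        ext P
        by_cases hP : P ∈ primesOver (span {(p : ℤ)}) (𝓞 K)
        · exact congrArg Fin.val (congrFun hIJ ⟨P, hP⟩)
        · rw [Multiset.count_eq_zero.2 fun h => hP (hover I P h),
            Multiset.count_eq_zero.2 fun h => hP (hover J P h)]
    _ = (e + 1) ^ Fintype.card (primesOver (span {(p : ℤ)}) (𝓞 K)) := by
        simp
    _ ≤ _ := Nat.pow_le_pow_right (by omega) (card_primesOver_le_finrank hp)

theorem NumberField.tendsto_sum_natCard_absNorm_eq_div :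
    Tendsto (fun n : ℕ => (∑ k ∈ Finset.Icc 1 n,
      (Nat.card {I : Ideal (𝓞 K) // absNorm I = k} : ℝ)) / (n : ℝ)) atTop
      (nhds (dedekindZeta_residue K)) := by
  refine ((Ideal.tendsto_norm_le_div_atTop₀ K).comp tendsto_natCast_atTop_atTop).congr fun n ↦ ?_
  simp only [Function.comp_apply, Nat.cast_le, ← Nat.cast_sum]
  congr
  rw [← add_left_inj 1, ← card_norm_le_eq_card_norm_le_add_one,
    show Finset.Icc 1 n = Finset.Ioc 0 n from Finset.Icc_succ_left_eq_Ioc _ _,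
    show 1 = Nat.card {I : Ideal (𝓞 K) // absNorm I = 0} by simp [Ideal.absNorm_eq_zero_iff],
    Finset.sum_Ioc_add_eq_sum_Icc (n.zero_le),
    ← Finset.card_preimage_eq_sum_card_image_eq (fun k _ ↦ finite_setOfPred_absNorm_eq k)]
  simp [Set.coe_eq_subtype]

theorem LSeries.term_ofReal {a : ℕ → ℝ} (ha : a 0 = 0) (s : ℝ) (n : ℕ) :
    LSeries.term (fun n => (a n : ℂ)) s n = ((a n * (n : ℝ) ^ (-s) : ℝ) : ℂ) := by
  rcases eq_or_ne n 0 with rfl | hn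
  · simp [ha]
  · rw [LSeries.term_of_ne_zero hn, Real.rpow_neg n.cast_nonneg, ← div_eq_mul_inv,
      Complex.ofReal_div, Complex.ofReal_cpow n.cast_nonneg, Complex.ofReal_natCast]

theorem tendsto_sub_one_mul_tsum_of_tendsto_sum_div {a : ℕ → ℝ} (ha : ∀ n, 0 ≤ a n)
    (ha0 : a 0 = 0) {κ : ℝ}
    (h : Tendsto (fun n : ℕ => (∑ k ∈ Finset.Icc 1 n, a k) / (n : ℝ)) atTop (nhds κ)) :
    (∀ s : ℝ, 1 < s → Summable fun n : ℕ => a n * (n : ℝ) ^ (-s)) ∧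
    Tendsto (fun s : ℝ => (s - 1) * ∑' n : ℕ, a n * (n : ℝ) ^ (-s))
      (nhdsWithin 1 (Set.Ioi 1)) (nhds κ) := by
  constructor
  · intro s hs
    have h1 : LSeriesSummable (fun n => (a n : ℂ)) (s : ℂ) :=
      LSeriesSummable_of_sum_norm_bigO_and_nonneg (r := 1)
        (Asymptotics.isBigO_atTop_natCast_rpow_of_tendsto_div_rpow (a := κ) (by simpa using h)) ha
        zero_le_one (by simpa using hs)
    rw [LSeriesSummable, funext (LSeries.term_ofReal ha0 s)] at h1
    exact Complex.summable_ofReal.1 h1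
  · have h2 := LSeries_tendsto_sub_mul_nhds_one_of_tendsto_sum_div_and_nonneg a h ha
    have h3 := (Complex.continuous_re.tendsto _).comp h2
    refine h3.congr fun s => ?_
    simp only [Function.comp]
    rw [LSeries, funext (LSeries.term_ofReal ha0 s), ← Complex.ofReal_tsum,
      ← Complex.ofReal_one, ← Complex.ofReal_sub, ← Complex.ofReal_mul, Complex.ofReal_re]

end IdealCount

section DegreeOnePrimes

open NumberField Ideal RingOfIntegers

variable {K : Type*} [Field K] [NumberField K]

theorem Ideal.absNorm_eq_iff_inertiaDeg_eq_one {p : ℕ} [Fact p.Prime]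
    (P : primesOver (span {(p : ℤ)}) (𝓞 K)) :
    absNorm P.1 = p ↔ P.1.inertiaDeg ℤ = 1 := by
  have hmax := Int.ideal_span_isMaximal_of_prime p
  have hP := P.2.1
  have hover := P.2.2
  have hPmax : P.1.IsMaximal := primesOver.isMaximal P
  have hcard : absNorm P.1 = p ^ P.1.inertiaDeg ℤ := by
    let _ : Field (ℤ ⧸ span {(p : ℤ)}) := Ideal.Quotient.field _
    rw [inertiaDeg_eq_of_isMaximal (span {(p : ℤ)}), absNorm_apply, Submodule.cardQuot_apply,
      Module.natCard_eq_pow_finrank (K := ℤ ⧸ span {(p : ℤ)}),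
      Nat.card_congr (Int.quotientSpanNatEquivZMod p).toEquiv, Nat.card_zmod]
  rw [hcard]
  exact ⟨fun h => Nat.pow_right_injective (Fact.out : p.Prime).two_le (by simpa using h),
    fun h => by rw [h, pow_one]⟩

theorem NumberField.natCard_absNorm_eq_prime {θ : 𝓞 K} {p : ℕ} [Fact p.Prime]
    (hp : ¬ p ∣ exponent θ) :
    Nat.card {I : Ideal (𝓞 K) // absNorm I = p} =
      Nat.card {t : ZMod p // ((minpoly ℤ θ).map (Int.castRingHom (ZMod p))).eval t = 0} := by
  have hpp : p.Prime := Fact.out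
  set g := (minpoly ℤ θ).map (Int.castRingHom (ZMod p)) with hg
  have hg0 : g ≠ 0 := ((minpoly.monic θ.isIntegral).map _).ne_zero
  have e1 : {I : Ideal (𝓞 K) // absNorm I = p} ≃
      {P : primesOver (span {(p : ℤ)}) (𝓞 K) // absNorm P.1 = p} :=
    (Equiv.subtypeSubtypeEquivSubtype fun {I} hI => (mem_primesOver_span_natCast_iff hpp).2
      ⟨isPrime_of_irreducible_absNorm (hI ▸ hpp), by simpa [hI] using absNorm_mem I⟩).symm
  have e2 : {P : primesOver (span {(p : ℤ)}) (𝓞 K) // absNorm P.1 = p} ≃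
      {Q : monicFactorsMod θ p // Q.1.natDegree = 1} :=
    (NumberField.Ideal.primesOverSpanEquivMonicFactorsMod hp).subtypeEquiv fun P => by
      rw [absNorm_eq_iff_inertiaDeg_eq_one,
        ← NumberField.Ideal.inertiaDeg_primesOverSpanEquivMonicFactorsMod_symm_apply' hp
          (NumberField.Ideal.primesOverSpanEquivMonicFactorsMod hp P).2]
      simp
  have hmem : ∀ t : ZMod p, X - C t ∈ monicFactorsMod θ p ↔ g.eval t = 0 := fun t => by
    rw [monicFactorsMod, Multiset.mem_toFinset,
      UniqueFactorizationMonoid.mem_normalizedFactors_iff' hg0, ← IsRoot.def, ← dvd_iff_isRoot]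
    exact ⟨fun h => h.2.2, fun h => ⟨irreducible_X_sub_C t, (monic_X_sub_C t).normalize_eq_self, h⟩⟩
  rw [Nat.card_congr e1, Nat.card_congr e2]
  symm
  refine Nat.card_congr (Equiv.ofBijective
    (fun t => ⟨⟨X - C t.1, (hmem t.1).2 t.2⟩, natDegree_X_sub_C t.1⟩) ⟨?_, ?_⟩)
  · intro s t h
    have h : (X - C s.1 : (ZMod p)[X]) = X - C t.1 :=
      congrArg (fun Q : {Q : monicFactorsMod θ p // Q.1.natDegree = 1} => Q.1.1) h
    exact Subtype.ext (C_injective (sub_right_injective h))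
  · rintro ⟨⟨Q, hQ⟩, hdeg⟩
    have hQ' := hQ
    rw [monicFactorsMod, Multiset.mem_toFinset,
      UniqueFactorizationMonoid.mem_normalizedFactors_iff' hg0] at hQ'
    have hmon : Q.Monic := by
      rw [← hQ'.2.1]
      exact monic_normalize hQ'.1.ne_zero
    have hX : Q = X - C (-Q.coeff 0) := by
      rw [C_neg, sub_neg_eq_add]
      exact hmon.eq_X_add_C hdeg
    exact ⟨⟨-Q.coeff 0, (hmem _).1 (hX ▸ hQ)⟩, Subtype.ext (Subtype.ext hX.symm)⟩

theorem NumberField.exponent_ne_zero {θ : 𝓞 K} (hθ : Algebra.adjoin ℚ {(θ : K)} = ⊤) :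
    exponent θ ≠ 0 := by
  have hθInt : IsIntegral ℤ (θ : K) := θ.isIntegral_coe
  set B := PowerBasis.ofAdjoinEqTop hθInt.tower_top hθ with hB
  have hgen : B.gen = (θ : K) := PowerBasis.ofAdjoinEqTop_gen _ _
  obtain ⟨d, hd⟩ := (IsIntegrallyClosed.isIntegral_iff (R := ℤ)).1
    (Algebra.discr_isIntegral ℚ (R := ℤ) (b := B.basis) fun i => by
      rw [B.basis_eq_pow, hgen]
      exact hθInt.pow _)
  have hd0 : d ≠ 0 := by
    rintro rfl
    exact Algebra.discr_not_zero_of_basis ℚ B.basis (by rw [← hd]; simp)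
  have hmem : (d : 𝓞 K) ∈ conductor ℤ θ := by
    rw [mem_conductor_iff]
    intro b
    have h1 := Algebra.discr_mul_isIntegral_mem_adjoin ℚ (R := ℤ) (B := B)
      (by rw [hgen]; exact hθInt) b.isIntegral_coe
    rw [hgen, ← hd] at h1
    have h2 : (Algebra.adjoin ℤ {(θ : K)}) =
        (Algebra.adjoin ℤ {θ}).map (IsScalarTower.toAlgHom ℤ (𝓞 K) K) := by
      rw [AlgHom.map_adjoin]
      simp
    rw [h2] at h1
    obtain ⟨y, hy, hyb⟩ := h1
    have : y = d * b := by
      apply RingOfIntegers.coe_injective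
      simpa [Algebra.smul_def] using hyb
    exact this ▸ hy
  rw [exponent, Ne, absNorm_eq_zero_iff]
  intro h
  have : d ∈ under ℤ (conductor ℤ θ) := by simpa [mem_comap] using hmem
  rw [h] at this
  exact hd0 (by simpa using this)

end DegreeOnePrimes

section Roots

theorem nu1_eq_natCard_roots {f : ℤ[X]} {p : ℕ} [Fact p.Prime] (hp : ¬ (p : ℤ) ∣ f.coeff 0) :
    nu1 f p = Nat.card {t : ZMod p // (f.map (Int.castRingHom (ZMod p))).eval t = 0} := by
  have hpp : p.Prime := Fact.out
  have hev : ∀ a : ℕ, (f.map (Int.castRingHom (ZMod p))).eval (a : ZMod p) = 0 ↔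
      (p : ℤ) ∣ f.eval (a : ℤ) := fun a => by
    rw [← ZMod.intCast_zmod_eq_zero_iff_dvd, eval_map, ← eq_intCast (Int.castRingHom (ZMod p)),
      ← eval₂_at_apply]
    simp
  rw [nu1, Nat.card_eq_fintype_card, Fintype.card_subtype]
  refine Finset.card_nbij' (fun a : ℕ => (a : ZMod p)) ZMod.val ?_ ?_ ?_ ?_
  · intro a ha
    obtain ⟨-, -, ha⟩ := Finset.mem_filter.1 ha
    exact Finset.mem_filter.2 ⟨Finset.mem_univ _, (hev a).2 ha⟩
  · intro t ht
    have ht := (Finset.mem_filter.1 ht).2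
    refine Finset.mem_filter.2 ⟨Finset.mem_range.2 t.val_lt, ?_, (hev _).1 (by simpa using ht)⟩
    refine Nat.Coprime.symm ((Nat.Prime.coprime_iff_not_dvd hpp).2 fun hdvd => hp ?_)
    have h0 : t = 0 := by
      rw [← ZMod.natCast_zmod_val t]
      exact (ZMod.natCast_eq_zero_iff _ _).2 hdvd
    rw [coeff_zero_eq_eval_zero]
    have := (hev 0).1 (by simpa [h0] using ht)
    simpa using this
  · intro a ha
    exact ZMod.val_cast_of_lt (Finset.mem_range.1 (Finset.mem_filter.1 ha).1)
  · intro t _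
    exact ZMod.natCast_zmod_val t

theorem minpoly_leadingCoeff_smul_eq_integralNormalization {K : Type*} [Field K] [NumberField K]
    {f : ℤ[X]} (hirr : Irreducible (f.map (Int.castRingHom ℚ))) {θ : K} (hθ : aeval θ f = 0) :
    minpoly ℤ ((algebraMap ℤ K f.leadingCoeff) * θ) = f.integralNormalization := by
  have hf0 : f ≠ 0 := by
    rintro rfl
    simp at hirr
  have hinj : Function.Injective (Int.castRingHom ℚ) := Int.cast_injective
  set α := (algebraMap ℤ K f.leadingCoeff) * θ with hα
  have hα0 : aeval α f.integralNormalization = 0 :=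
    integralNormalization_aeval_eq_zero hθ fun x hx => by simpa using hx
  have hαint : IsIntegral ℤ α := ⟨_, monic_integralNormalization hf0, hα0⟩
  refine (eq_of_monic_of_dvd_of_natDegree_le (minpoly.monic hαint)
    (monic_integralNormalization hf0) (minpoly.isIntegrallyClosed_dvd hαint hα0) ?_).symm
  rw [natDegree_integralNormalization]
  set g := (minpoly ℤ α).map (Int.castRingHom ℚ) with hg
  have hcomp : f.map (Int.castRingHom ℚ) ∣ g.comp (C (f.leadingCoeff : ℚ) * X) := by
    have h1 : f.map (Int.castRingHom ℚ) ∣ minpoly ℚ θ := by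
      rw [← minpoly.eq_of_irreducible hirr (by rwa [← algebraMap_int_eq, aeval_map_algebraMap])]
      exact dvd_mul_right _ _
    refine h1.trans (minpoly.dvd ℚ θ ?_)
    rw [aeval_comp, hg, ← algebraMap_int_eq, aeval_map_algebraMap]
    have : aeval θ (C (f.leadingCoeff : ℚ) * X) = α := by simp [hα]
    rw [this, minpoly.aeval]
  have hlc : (f.leadingCoeff : ℚ) ≠ 0 := by simpa using hf0
  have hg0 : g ≠ 0 := ((minpoly.monic hαint).map _).ne_zero
  have := natDegree_le_of_dvd hcomp ?_
  · rw [natDegree_comp, natDegree_C_mul_X _ hlc, mul_one,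
      natDegree_map_eq_of_injective hinj] at this
    exact this.trans natDegree_map_le
  · intro h
    rw [comp_eq_zero_iff] at h
    rcases h with h | ⟨-, h⟩
    · exact hg0 h
    · have := congrArg natDegree h
      rw [natDegree_C_mul_X _ hlc, natDegree_C] at this
      exact one_ne_zero this

theorem natCard_roots_integralNormalization {f : ℤ[X]} {p : ℕ} [Fact p.Prime]
    (hp : ¬ (p : ℤ) ∣ f.leadingCoeff) :
    Nat.card {t : ZMod p // (f.integralNormalization.map (Int.castRingHom (ZMod p))).eval t = 0} =
      Nat.card {t : ZMod p // (f.map (Int.castRingHom (ZMod p))).eval t = 0} := by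
  have hc : (f.leadingCoeff : ZMod p) ≠ 0 := by
    rwa [Ne, ZMod.intCast_zmod_eq_zero_iff_dvd]
  symm
  refine Nat.card_congr ((Equiv.mulLeft₀ _ hc).subtypeEquiv fun t => ?_)
  have h1 := scaleRoots_eval₂_mul (p := f) (Int.castRingHom (ZMod p)) t f.leadingCoeff
  rw [← leadingCoeff_smul_integralNormalization, eval₂_smul] at h1
  simp only [eq_intCast] at h1
  rw [eval_map, eval_map, Equiv.mulLeft₀_apply]
  constructor
  · intro h
    rw [h, mul_zero] at h1
    exact (mul_eq_zero.1 h1).resolve_left hc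
  · intro h
    rw [h, mul_zero] at h1
    exact (mul_eq_zero.1 h1.symm).resolve_left (pow_ne_zero _ hc)

end Roots

theorem exists_numberField_root {f : ℚ[X]} (hirr : Irreducible f) :
    ∃ (K : Type) (_ : Field K) (_ : NumberField K) (θ : K),
      aeval θ f = 0 ∧ Algebra.adjoin ℚ {θ} = ⊤ := by
  have : Fact (Irreducible f) := ⟨hirr⟩
  have hfin : FiniteDimensional ℚ (AdjoinRoot f) := (AdjoinRoot.powerBasis hirr.ne_zero).finite
  have hchar : CharZero (AdjoinRoot f) := algebraRat.charZero _
  have hroot : aeval (AdjoinRoot.root f) f = 0 := by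
    rw [aeval_def, Subsingleton.elim (algebraMap ℚ (AdjoinRoot f)) (AdjoinRoot.of f),
      AdjoinRoot.eval₂_root]
  have htop : Algebra.adjoin ℚ {AdjoinRoot.root f} = ⊤ := AdjoinRoot.adjoinRoot_eq_top
  refine ⟨AdjoinRoot f, inferInstance, { to_finiteDimensional := ?_ }, AdjoinRoot.root f, hroot, ?_⟩
  · convert hfin
  · convert htop

open NumberField in
theorem NumberField.exists_nu1_eq_natCard_absNorm_eq {K : Type*} [Field K] [NumberField K]
    {f : ℤ[X]} (hirr : Irreducible (f.map (Int.castRingHom ℚ))) (hconst : f.coeff 0 ≠ 0) {θ : K}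
    (hθ : aeval θ f = 0) (hadj : Algebra.adjoin ℚ {θ} = ⊤) :
    ∃ N : ℕ, N ≠ 0 ∧ ∀ p : ℕ, p.Prime → ¬ p ∣ N →
      nu1 f p = Nat.card {I : Ideal (𝓞 K) // Ideal.absNorm I = p} := by
  have hf0 : f ≠ 0 := by
    rintro rfl
    exact hconst rfl
  have hlc : (f.leadingCoeff : K) ≠ 0 := by simpa using hf0
  have hmin := minpoly_leadingCoeff_smul_eq_integralNormalization hirr hθ
  have hθInt : IsIntegral ℤ (algebraMap ℤ K f.leadingCoeff * θ) := by
    rw [← Algebra.smul_def]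
    exact isIntegral_leadingCoeff_smul f θ hθ
  let α : 𝓞 K := ⟨_, hθInt⟩
  have hα : (α : K) = algebraMap ℤ K f.leadingCoeff * θ := rfl
  rw [← hα, minpoly.algebraMap_eq RingOfIntegers.coe_injective α] at hmin
  have htop : Algebra.adjoin ℚ {(α : K)} = ⊤ := by
    rw [← top_le_iff, ← hadj, Algebra.adjoin_le_iff, Set.singleton_subset_iff]
    have h1 : (f.leadingCoeff : ℚ)⁻¹ • (α : K) = θ := by
      rw [hα, Algebra.smul_def]
      simp [hlc]
    have h2 := Subalgebra.smul_mem _ (Algebra.self_mem_adjoin_singleton ℚ (α : K))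
      (f.leadingCoeff : ℚ)⁻¹
    rwa [h1] at h2
  have hexp := NumberField.exponent_ne_zero htop
  refine ⟨RingOfIntegers.exponent α * (f.leadingCoeff.natAbs * (f.coeff 0).natAbs),
    by simpa using ⟨hexp, hf0, hconst⟩, fun p hp hpN => ?_⟩
  have : Fact p.Prime := ⟨hp⟩
  rw [nu1_eq_natCard_roots fun h => hpN (((Int.natCast_dvd.1 h).mul_left _).mul_left _),
    NumberField.natCard_absNorm_eq_prime fun h => hpN (h.mul_right _), hmin,
    natCard_roots_integralNormalization fun h =>
      hpN (((Int.natCast_dvd.1 h).mul_right _).mul_left _)]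

theorem Real.abs_neg_log_one_sub_sub_le {ν M p : ℝ} (hν : 0 ≤ ν) (hνM : ν ≤ M)
    (hp : 2 * M + 2 ≤ p) :
    |-Real.log (1 - ν / (p - 1)) - ν / p| ≤ (8 * M ^ 2 + 2 * M) * (p⁻¹) ^ 2 := by
  have hM : 0 ≤ M := hν.trans hνM
  have hp0 : 0 < p := by linarith
  have hp1 : 0 < p - 1 := by linarith
  have hp2 : p / 2 ≤ p - 1 := by linarith
  set x := ν / (p - 1) with hx
  have hx0 : 0 ≤ x := by positivity
  have hxhalf : x ≤ 1 / 2 := by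
    rw [hx, div_le_iff₀ hp1]
    linarith
  have hxM : x ≤ 2 * M * p⁻¹ := by
    rw [hx, div_le_iff₀ hp1]
    calc ν ≤ M := hνM
      _ = 2 * M * p⁻¹ * (p / 2) := by field_simp
      _ ≤ _ := by gcongr
  have h1 := Real.abs_log_sub_add_sum_range_le (x := x) (by rw [abs_of_nonneg hx0]; linarith) 1
  rw [abs_of_nonneg hx0] at h1
  simp only [Finset.sum_range_one, Nat.cast_zero, zero_add, pow_one, div_one] at h1
  have h2 : x ^ (1 + 1) / (1 - x) ≤ 2 * x ^ 2 := by
    rw [div_le_iff₀ (by linarith), one_add_one_eq_two]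
    nlinarith [mul_nonneg (sq_nonneg x) (sub_nonneg.2 hxhalf)]
  have h3 : 2 * x ^ 2 ≤ 8 * M ^ 2 * (p⁻¹) ^ 2 := by
    calc 2 * x ^ 2 ≤ 2 * (2 * M * p⁻¹) ^ 2 := by gcongr
      _ = _ := by ring
  have h4 : x - ν / p = x * p⁻¹ := by
    rw [hx]
    field_simp
    ring
  have h5 : x * p⁻¹ ≤ 2 * M * (p⁻¹) ^ 2 := by
    calc x * p⁻¹ ≤ 2 * M * p⁻¹ * p⁻¹ := by gcongr
      _ = _ := by ring
  have h6 : 0 ≤ x * p⁻¹ := by positivity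
  rw [show -Real.log (1 - x) - ν / p = -(x + Real.log (1 - x)) + x * p⁻¹ by rw [← h4]; ring]
  refine (abs_add_le _ _).trans ?_
  rw [abs_neg, abs_of_nonneg h6]
  linarith

theorem nu1_product_asymptotic (f : Polynomial ℤ) (hirr : Irreducible f)
    (hdeg : 1 ≤ f.natDegree) (hconst : f.coeff 0 ≠ 0)
    (hloc : ∀ p : ℕ, p.Prime → nu1 f p < p - 1) :
    ∃ c : ℝ, 0 < c ∧
      Tendsto (fun x : ℝ => Real.log x *
          ∏ p ∈ (Finset.range (⌊x⌋₊ + 1)).filter Nat.Prime,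
            (1 - (nu1 f p : ℝ) / ((p : ℝ) - 1)))
        atTop (nhds c) := by
  have hirrQ := (IsPrimitive.Int.irreducible_iff_irreducible_map_cast
    (hirr.isPrimitive (by omega))).1 hirr
  obtain ⟨K, _, _, θ, hθ, hadj⟩ := exists_numberField_root hirrQ
  rw [← algebraMap_int_eq, aeval_map_algebraMap] at hθ
  obtain ⟨N, hN, hnu⟩ := NumberField.exists_nu1_eq_natCard_absNorm_eq hirrQ hconst hθ hadj
  set a : ℕ → ℝ := fun n =>
    if n = 0 then 0 else (Nat.card {I : Ideal (NumberField.RingOfIntegers K) // Ideal.absNorm I = n} : ℝ) with ha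
  set D := Module.finrank ℚ K with hD
  have ha_ne : ∀ n, n ≠ 0 → a n = Nat.card {I : Ideal (NumberField.RingOfIntegers K) // Ideal.absNorm I = n} :=
    fun n hn => if_neg hn
  have ha0 : a 0 = 0 := if_pos rfl
  have hnonneg : ∀ n, 0 ≤ a n := fun n => by
    simp only [ha]
    split_ifs <;> positivity
  have ha1 : a 1 = 1 := by
    rw [ha_ne 1 one_ne_zero]
    simp [Ideal.absNorm_eq_one_iff]
  have hmul : ∀ m n : ℕ, m.Coprime n → a (m * n) = a m * a n := fun m n h => by
    rcases eq_or_ne m 0 with rfl | hm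
    · simp [ha0]
    rcases eq_or_ne n 0 with rfl | hn
    · simp [ha0]
    rw [ha_ne _ (mul_ne_zero hm hn), ha_ne _ hm, ha_ne _ hn, Ideal.natCard_absNorm_eq_mul h,
      Nat.cast_mul]
  have hbd : ∀ (p : Nat.Primes) (e : ℕ), a ((p : ℕ) ^ e) ≤ ((e : ℝ) + 1) ^ D := fun p e => by
    rw [ha_ne _ (pow_pos p.2.pos e).ne']
    exact_mod_cast Ideal.natCard_absNorm_eq_prime_pow_le p.2 e
  obtain ⟨hsum, hres⟩ := tendsto_sub_one_mul_tsum_of_tendsto_sum_div hnonneg ha0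
    ((NumberField.tendsto_sum_natCard_absNorm_eq_div (K := K)).congr fun n => by
      rw [Finset.sum_congr rfl fun k hk =>
        (ha_ne k (Nat.one_le_iff_ne_zero.1 (Finset.mem_Icc.1 hk).1)).symm])
  set w : ℕ → ℝ := fun p => -Real.log (1 - (nu1 f p : ℝ) / ((p : ℝ) - 1)) with hw
  have hratio : ∀ p : ℕ, p.Prime →
      0 ≤ (nu1 f p : ℝ) / ((p : ℝ) - 1) ∧ (nu1 f p : ℝ) / ((p : ℝ) - 1) < 1 := fun p hp => by
    have h1 : (1 : ℝ) < p := by exact_mod_cast hp.one_lt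
    have h2 : (nu1 f p : ℝ) + 1 < p := by
      have := hloc p hp
      exact_mod_cast (by omega : nu1 f p + 1 < p)
    exact ⟨div_nonneg (Nat.cast_nonneg _) (by linarith), by
      rw [div_lt_one (by linarith)]; linarith⟩
  have hw0 : ∀ p, p.Prime → 0 ≤ w p := fun p hp => by
    have := hratio p hp
    exact neg_nonneg.2 (Real.log_nonpos (by linarith) (by linarith))
  have hwa : Summable fun p : Nat.Primes => |w p - a p / (p : ℕ)| := by
    refine (Nat.Primes.summable_inv_sq.mul_left
      (8 * ((2 : ℝ) ^ D) ^ 2 + 2 * 2 ^ D)).of_norm_bounded_eventually ?_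
    have hcof : Tendsto (fun p : Nat.Primes => (p : ℕ)) cofinite atTop := by
      rw [← Nat.cofinite_eq_atTop]
      exact Nat.Primes.coe_nat_injective.tendsto_cofinite
    filter_upwards [hcof.eventually_gt_atTop N,
      hcof.eventually_ge_atTop (2 * 2 ^ D + 2)] with p hpN hpD
    have hap : a p = nu1 f p := by
      rw [ha_ne _ p.2.ne_zero, hnu p p.2 (Nat.not_dvd_of_pos_of_lt (Nat.pos_of_ne_zero hN) hpN)]
    have hle : a p ≤ 2 ^ D := by simpa [one_add_one_eq_two] using hbd p 1
    rw [Real.norm_eq_abs, abs_abs, hw, hap]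
    exact Real.abs_neg_log_one_sub_sub_le (Nat.cast_nonneg _) (hap ▸ hle) (by exact_mod_cast hpD)
  obtain ⟨c, hc⟩ := exists_tendsto_weighted_mertens hnonneg ha0 ha1 hmul hbd hsum
    (NumberField.dedekindZeta_residue_pos K) hres hw0 hwa
  refine ⟨Real.exp (-c), Real.exp_pos _, ((Real.continuous_exp.tendsto _).comp hc.neg).congr' ?_⟩
  filter_upwards [eventually_gt_atTop 1] with x hx
  simp only [Function.comp]
  rw [neg_sub, sub_eq_add_neg, Real.exp_add, Real.exp_log (Real.log_pos hx),
    ← Finset.sum_neg_distrib, Real.exp_sum]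
  congr 1
  refine Finset.prod_congr rfl fun p hp => ?_
  have := hratio p (Finset.mem_filter.1 hp).2
  rw [hw, neg_neg, Real.exp_log (by linarith)]
end

section
/- Fix real numbers α, β with 0 < α < β < 1/k and β > 1/(r+1) for a positive integer r. For large x set N = max{f(p) : p prime, x < p ≤ 2x}, z = N^α, y = N^β, η = r + 1 − 1/β, P(z) = ∏_{p < z, p prime} p, and for a positive integer n set w(n) = 1 − (1/η)·∑_{p | n, z ≤ p < y} (1 − log p/log y). Let S = ∑_{p prime, x < p ≤ 2x, gcd(f(p), P(z)) = 1} w(f(p)). If there exists C > 0 such that S ≥ C·x/(log x)² for all sufficiently large x, then there exists C' > 0 such that #{p prime : x < p ≤ 2x, Ω(f(p)) ≤ r} ≥ C'·x/(log x)² for all sufficiently large x. -/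
open Polynomial

/-- N = max{f(p) : p prime, x < p ≤ 2x}. -/
noncomputable def Nmax (f : Polynomial ℤ) (x : ℝ) : ℕ :=
  ((Finset.Ioc ⌊x⌋₊ ⌊2 * x⌋₊).filter Nat.Prime).sup (fun p => (f.eval (p : ℤ)).toNat)

/-- P(z) = ∏_{p < z, p prime} p. -/
noncomputable def primorialBelow (z : ℝ) : ℕ :=
  ∏ p ∈ (Finset.range ⌈z⌉₊).filter Nat.Prime, p

/-- The weighted sum S = ∑_{x < p ≤ 2x, (f(p), P(z)) = 1} w(f(p)) with
    z = N^α, y = N^β, η = r + 1 − 1/β and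
    w(n) = 1 − (1/η)·∑_{p ∣ n, z ≤ p < y} (1 − log p/log y). -/
noncomputable def Swt (f : Polynomial ℤ) (α β : ℝ) (r : ℕ) (x : ℝ) : ℝ :=
  let N : ℝ := (Nmax f x : ℝ)
  let z : ℝ := N ^ α
  let y : ℝ := N ^ β
  let η : ℝ := (r : ℝ) + 1 - 1 / β
  ∑ p ∈ (Finset.Ioc ⌊x⌋₊ ⌊2 * x⌋₊).filter
      (fun p : ℕ => p.Prime ∧ Int.gcd (f.eval (p : ℤ)) (primorialBelow z) = 1),
    (1 - (1 / η) * ∑ q ∈ (f.eval (p : ℤ)).natAbs.primeFactors.filter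
        (fun q : ℕ => z ≤ (q : ℝ) ∧ (q : ℝ) < y),
      (1 - Real.log q / Real.log y))

theorem Irreducible.exists_bezout_derivative {f : ℤ[X]} (hf : Irreducible f)
    (hdeg : f.natDegree ≠ 0) :
    ∃ D : ℤ, D ≠ 0 ∧ ∃ u v : ℤ[X], f * u + derivative f * v = C D := by
  have hirr : Irreducible (f.map (Int.castRingHom ℚ)) :=
    (IsPrimitive.Int.irreducible_iff_irreducible_map_cast (hf.isPrimitive hdeg)).mp hf
  have hres := resultant_ne_zero _ _ hirr.separable
  rw [derivative_map, natDegree_map_eq_of_injective (RingHom.injective_int _),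
    natDegree_map_eq_of_injective (RingHom.injective_int _), resultant_map_map] at hres
  obtain ⟨u, v, -, -, h⟩ := exists_mul_add_mul_eq_C_resultant f (derivative f) le_rfl le_rfl
    (Or.inl hdeg)
  exact ⟨_, fun h0 => hres (by rw [h0, map_zero]), u, v, h⟩

theorem Irreducible.exists_forall_prime_not_dvd_eval_derivative {f : ℤ[X]} (hf : Irreducible f)
    (hdeg : f.natDegree ≠ 0) :
    ∃ Q : ℕ, ∀ q : ℕ, Q < q → ∀ m : ℤ, (q : ℤ) ∣ f.eval m → ¬ (q : ℤ) ∣ (derivative f).eval m := by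
  obtain ⟨D, hD, u, v, h⟩ := hf.exists_bezout_derivative hdeg
  refine ⟨D.natAbs, fun q hq m h₁ h₂ => ?_⟩
  have hdvd : (q : ℤ) ∣ D := by
    rw [← eval_C (a := D) (x := m), ← h, eval_add, eval_mul, eval_mul]
    exact dvd_add (h₁.mul_right _) (h₂.mul_right _)
  exact absurd (Nat.le_of_dvd (Int.natAbs_pos.mpr hD) (Int.natCast_dvd.mp hdvd)) (by omega)

theorem sq_dvd_sub_of_sq_dvd_eval {f : ℤ[X]} {q : ℕ} (hq : q.Prime) {m n : ℤ}
    (hm : ((q : ℤ) ^ 2) ∣ f.eval m) (hn : ((q : ℤ) ^ 2) ∣ f.eval n)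
    (hder : ¬ (q : ℤ) ∣ (derivative f).eval m) (hmn : (q : ℤ) ∣ n - m) :
    ((q : ℤ) ^ 2) ∣ n - m := by
  obtain ⟨c, hc⟩ := f.binomExpansion m (n - m)
  rw [add_sub_cancel] at hc
  have h : ((q : ℤ) ^ 2) ∣ (derivative f).eval m * (n - m) := by
    have : (derivative f).eval m * (n - m) = f.eval n - f.eval m - c * (n - m) ^ 2 := by
      linear_combination -hc
    rw [this]
    exact dvd_sub (dvd_sub hn hm) ((pow_dvd_pow_of_dvd hmn 2).mul_left c)
  have hcop : IsCoprime ((q : ℤ) ^ 2) ((derivative f).eval m) :=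
    IsCoprime.pow_left ((Nat.prime_iff_prime_int.mp hq).coprime_iff_not_dvd.mpr hder)
  exact hcop.dvd_of_dvd_mul_left h

theorem card_filter_Ioc_modEq_le {a b : ℕ} (hab : a ≤ b) {r : ℕ} (hr : 0 < r) (v : ℕ) :
    (((Finset.Ioc a b).filter (fun m => m ≡ v [MOD r])).card : ℝ) ≤ ((b : ℝ) - a) / r + 1 := by
  have h := Nat.Ioc_filter_modEq_card a b hr v
  have key : (((Finset.Ioc a b).filter (fun m => m ≡ v [MOD r])).card : ℚ)
      ≤ ((b : ℚ) - a) / r + 1 := by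
    have h' : (((Finset.Ioc a b).filter (fun m => m ≡ v [MOD r])).card : ℚ) =
      ((max (⌊((b : ℚ) - v) / (r : ℚ)⌋ - ⌊((a : ℚ) - v) / (r : ℚ)⌋) 0 : ℤ) : ℚ) := by
      exact_mod_cast congrArg (Int.cast : ℤ → ℚ) h
    rw [h', Int.cast_max, max_le_iff]
    have hab' : (a : ℚ) ≤ b := by exact_mod_cast hab
    constructor
    · have h₁ := Int.floor_le (((b : ℚ) - v) / (r : ℚ))
      have h₂ := Int.lt_floor_add_one (((a : ℚ) - v) / (r : ℚ))
      have h₃ : ((b : ℚ) - a) / r = ((b : ℚ) - v) / r - ((a : ℚ) - v) / r := by ring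
      push_cast
      linarith
    · have : 0 ≤ ((b : ℚ) - a) / r := div_nonneg (by linarith) (by positivity)
      push_cast
      linarith
  have key' := (Rat.cast_le (K := ℝ)).mpr key
  push_cast at key'
  exact key'

theorem card_filter_Ioc_sq_dvd_eval_le {f : ℤ[X]} {q : ℕ} (hq : q.Prime)
    (hder : ∀ m : ℤ, (q : ℤ) ∣ f.eval m → ¬ (q : ℤ) ∣ (derivative f).eval m)
    {a b : ℕ} (hab : a ≤ b) :
    (((Finset.Ioc a b).filter (fun m : ℕ => ((q : ℤ) ^ 2) ∣ f.eval (m : ℤ))).card : ℝ) ≤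
      f.natDegree * (((b : ℝ) - a) / (q : ℝ) ^ 2 + 1) := by
  have : Fact q.Prime := ⟨hq⟩
  set T := (Finset.Ioc a b).filter (fun m : ℕ => ((q : ℤ) ^ 2) ∣ f.eval (m : ℤ))
  set g := f.map (Int.castRingHom (ZMod q))
  have heval (h : ℤ[X]) (m : ℤ) : (h.map (Int.castRingHom (ZMod q))).eval (m : ZMod q) =
      ((h.eval m : ℤ) : ZMod q) := by
    simp
  have hg : g ≠ 0 := by
    intro hg
    refine hder 0 ?_ ?_ <;> rw [← ZMod.intCast_zmod_eq_zero_iff_dvd, ← heval]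
    · simp [show f.map (Int.castRingHom (ZMod q)) = 0 from hg]
    · simp [← derivative_map, show f.map (Int.castRingHom (ZMod q)) = 0 from hg]
  have hmaps : ∀ m ∈ T, (m : ZMod q) ∈ g.roots.toFinset := by
    intro m hm
    rw [Multiset.mem_toFinset, mem_roots hg, IsRoot.def]
    have h₁ := heval f m
    rw [Int.cast_natCast] at h₁
    rw [h₁, ZMod.intCast_zmod_eq_zero_iff_dvd]
    exact (dvd_pow_self _ two_ne_zero).trans (Finset.mem_filter.mp hm).2
  have hfib : ∀ ρ ∈ g.roots.toFinset, ((T.filter (fun m : ℕ => (m : ZMod q) = ρ)).card : ℝ) ≤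
      ((b : ℝ) - a) / (q : ℝ) ^ 2 + 1 := by
    intro ρ _
    rcases (T.filter (fun m : ℕ => (m : ZMod q) = ρ)).eq_empty_or_nonempty with h | ⟨m₀, h₀⟩
    · rw [h, Finset.card_empty, Nat.cast_zero]
      have : (a : ℝ) ≤ b := by exact_mod_cast hab
      have : 0 ≤ ((b : ℝ) - a) / (q : ℝ) ^ 2 := div_nonneg (by linarith) (by positivity)
      linarith
    · rw [Finset.mem_filter, Finset.mem_filter] at h₀
      have h := card_filter_Ioc_modEq_le hab (pow_pos hq.pos 2) m₀
      rw [Nat.cast_pow] at h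
      refine le_trans ?_ h
      rw [Nat.cast_le]
      refine Finset.card_le_card fun m hm => ?_
      rw [Finset.mem_filter, Finset.mem_filter] at hm
      refine Finset.mem_filter.mpr ⟨hm.1.1, ?_⟩
      rw [Nat.modEq_iff_dvd, Nat.cast_pow]
      refine sq_dvd_sub_of_sq_dvd_eval hq hm.1.2 h₀.1.2
        (hder _ ((dvd_pow_self _ two_ne_zero).trans hm.1.2)) ?_
      rw [← Nat.modEq_iff_dvd, ← ZMod.natCast_eq_natCast_iff, hm.2, h₀.2]
  have hroots : (g.roots.toFinset.card : ℝ) ≤ f.natDegree := by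
    rw [Nat.cast_le]
    exact (Multiset.toFinset_card_le _).trans ((card_roots' g).trans natDegree_map_le)
  have hnn : 0 ≤ ((b : ℝ) - a) / (q : ℝ) ^ 2 + 1 := by
    have : (a : ℝ) ≤ b := by exact_mod_cast hab
    have : 0 ≤ ((b : ℝ) - a) / (q : ℝ) ^ 2 := div_nonneg (by linarith) (by positivity)
    linarith
  calc (T.card : ℝ) = ∑ ρ ∈ g.roots.toFinset, ((T.filter (fun m : ℕ => (m : ZMod q) = ρ)).card : ℝ) := by
        rw [Finset.card_eq_sum_card_fiberwise hmaps, Nat.cast_sum]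
    _ ≤ ∑ ρ ∈ g.roots.toFinset, (((b : ℝ) - a) / (q : ℝ) ^ 2 + 1) := Finset.sum_le_sum hfib
    _ = g.roots.toFinset.card * (((b : ℝ) - a) / (q : ℝ) ^ 2 + 1) := by
        rw [Finset.sum_const, nsmul_eq_mul]
    _ ≤ _ := mul_le_mul_of_nonneg_right hroots hnn

open Classical in
theorem card_filter_Ioc_exists_sq_dvd_eval_le {f : ℤ[X]} {z y : ℝ} (hz : 1 ≤ z) (hy : 0 ≤ y)
    (hder : ∀ q : ℕ, z ≤ q →
      ∀ m : ℤ, (q : ℤ) ∣ f.eval m → ¬ (q : ℤ) ∣ (derivative f).eval m)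
    {a b : ℕ} (hab : a ≤ b) :
    (((Finset.Ioc a b).filter (fun m : ℕ => ∃ q : ℕ, q.Prime ∧ z ≤ q ∧ (q : ℝ) < y ∧
      ((q : ℤ) ^ 2) ∣ f.eval (m : ℤ))).card : ℝ) ≤
      f.natDegree * (2 * ((b : ℝ) - a) / z + y + 1) := by
  have hab' : (0 : ℝ) ≤ (b : ℝ) - a := sub_nonneg.mpr (by exact_mod_cast hab)
  have hz0 : 0 < ⌈z⌉₊ := Nat.ceil_pos.mpr (by linarith)
  set I := (Finset.Ioo (⌈z⌉₊ - 1) ⌈y⌉₊)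
  have hsub : (Finset.Ioc a b).filter (fun m : ℕ => ∃ q : ℕ, q.Prime ∧ z ≤ q ∧ (q : ℝ) < y ∧
      ((q : ℤ) ^ 2) ∣ f.eval (m : ℤ)) ⊆ (I.filter Nat.Prime).biUnion
        (fun q => (Finset.Ioc a b).filter (fun m : ℕ => ((q : ℤ) ^ 2) ∣ f.eval (m : ℤ))) := by
    intro m hm
    obtain ⟨hm, q, hq, hzq, hqy, hdvd⟩ := Finset.mem_filter.mp hm
    refine Finset.mem_biUnion.mpr ⟨q, ?_, Finset.mem_filter.mpr ⟨hm, hdvd⟩⟩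
    have h₁ := Nat.ceil_le.mpr hzq
    exact Finset.mem_filter.mpr ⟨Finset.mem_Ioo.mpr ⟨by omega, Nat.lt_ceil.mpr hqy⟩, hq⟩
  have hcard : (I.card : ℝ) ≤ y + 1 := by
    have h₁ : I.card ≤ ⌈y⌉₊ := by rw [Nat.card_Ioo]; omega
    have h₂ : (I.card : ℝ) ≤ ⌈y⌉₊ := by exact_mod_cast h₁
    linarith [Nat.ceil_lt_add_one hy]
  have hsq : ∑ q ∈ I, ((q : ℝ) ^ 2)⁻¹ ≤ 2 / z := by
    refine (sum_Ioo_inv_sq_le _ _).trans ?_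
    have h₁ : ((⌈z⌉₊ - 1 : ℕ) : ℝ) + 1 = ⌈z⌉₊ := by
      rw [Nat.cast_sub hz0]; simp
    rw [h₁]
    exact div_le_div_of_nonneg_left (by norm_num) (by linarith) (Nat.le_ceil z)
  calc _ ≤ (((I.filter Nat.Prime).biUnion
        (fun q => (Finset.Ioc a b).filter
          (fun m : ℕ => ((q : ℤ) ^ 2) ∣ f.eval (m : ℤ)))).card : ℝ) := by
        exact_mod_cast Finset.card_le_card hsub
    _ ≤ ∑ q ∈ I.filter Nat.Prime, (((Finset.Ioc a b).filter
          (fun m : ℕ => ((q : ℤ) ^ 2) ∣ f.eval (m : ℤ))).card : ℝ) := by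
        exact_mod_cast Finset.card_biUnion_le
    _ ≤ ∑ q ∈ I.filter Nat.Prime, f.natDegree * (((b : ℝ) - a) / (q : ℝ) ^ 2 + 1) := by
        refine Finset.sum_le_sum fun q hq => ?_
        obtain ⟨hq, hp⟩ := Finset.mem_filter.mp hq
        have h₁ := (Finset.mem_Ioo.mp hq).1
        exact card_filter_Ioc_sq_dvd_eval_le hp (hder q (Nat.ceil_le.mp (by omega))) hab
    _ ≤ ∑ q ∈ I, f.natDegree * (((b : ℝ) - a) / (q : ℝ) ^ 2 + 1) := by
        refine Finset.sum_le_sum_of_subset_of_nonneg (Finset.filter_subset _ _) fun q _ _ => ?_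
        positivity
    _ = f.natDegree * (((b : ℝ) - a) * ∑ q ∈ I, ((q : ℝ) ^ 2)⁻¹ + I.card) := by
        rw [← Finset.mul_sum, Finset.sum_add_distrib, Finset.mul_sum]
        simp [div_eq_mul_inv]
    _ ≤ f.natDegree * (((b : ℝ) - a) * (2 / z) + (y + 1)) := by gcongr
    _ = _ := by ring

theorem cardFactors_le_of_weight_pos {n r : ℕ} {N β z y : ℝ} (hn : n ≠ 0) (hN : 1 < N)
    (hnN : (n : ℝ) ≤ N) (hβ : 0 < β) (hy : y = N ^ β) (hη : 0 < (r : ℝ) + 1 - 1 / β)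
    (hz : ∀ q : ℕ, q.Prime → q ∣ n → z ≤ q)
    (hsq : ∀ q : ℕ, q.Prime → (q : ℝ) < y → ¬ q ^ 2 ∣ n)
    (hw : 0 < 1 - (1 / ((r : ℝ) + 1 - 1 / β)) *
      ∑ q ∈ n.primeFactors.filter (fun q : ℕ => z ≤ (q : ℝ) ∧ (q : ℝ) < y),
        (1 - Real.log q / Real.log y)) :
    ArithmeticFunction.cardFactors n ≤ r := by
  have hlogN : 0 < Real.log N := Real.log_pos hN
  have hlogy : Real.log y = β * Real.log N := by rw [hy, Real.log_rpow (by linarith)]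
  have hlogy0 : 0 < Real.log y := by rw [hlogy]; positivity
  have hy0 : 0 < y := by rw [hy]; exact Real.rpow_pos_of_pos (by linarith) _
  have hlogn : Real.log n ≤ Real.log N :=
    Real.log_le_log (by exact_mod_cast Nat.pos_of_ne_zero hn) hnN
  have hsum : ∑ q ∈ n.primeFactors.filter (fun q : ℕ => z ≤ (q : ℝ) ∧ (q : ℝ) < y),
      (1 - Real.log q / Real.log y) < (r : ℝ) + 1 - 1 / β := by
    rwa [sub_pos, one_div_mul_eq_div, div_lt_one hη] at hw
  have hle : ∑ q ∈ n.primeFactors, (n.factorization q : ℝ) * (1 - Real.log q / Real.log y) ≤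
      ∑ q ∈ n.primeFactors.filter (fun q : ℕ => z ≤ (q : ℝ) ∧ (q : ℝ) < y),
        (1 - Real.log q / Real.log y) := by
    rw [Finset.sum_filter]
    refine Finset.sum_le_sum fun q hq => ?_
    have hp := Nat.prime_of_mem_primeFactors hq
    have hdvd := Nat.dvd_of_mem_primeFactors hq
    by_cases hqy : (q : ℝ) < y
    · rw [if_pos ⟨hz q hp hdvd, hqy⟩]
      have h₁ : ¬ 2 ≤ n.factorization q := fun h =>
        hsq q hp hqy ((hp.pow_dvd_iff_le_factorization hn).mpr h)
      have h₂ : 0 < n.factorization q := hp.factorization_pos_of_dvd hn hdvd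
      rw [show n.factorization q = 1 by omega, Nat.cast_one, one_mul]
    · rw [if_neg (fun h => hqy h.2)]
      have h₁ : Real.log y ≤ Real.log q := Real.log_le_log hy0 (not_lt.mp hqy)
      have h₂ : 1 ≤ Real.log q / Real.log y := (one_le_div hlogy0).mpr h₁
      exact mul_nonpos_of_nonneg_of_nonpos (Nat.cast_nonneg _) (by linarith)
  have hΩ : (ArithmeticFunction.cardFactors n : ℝ) = ∑ q ∈ n.primeFactors, (n.factorization q : ℝ) := by
    rw [ArithmeticFunction.cardFactors_eq_sum_factorization]
    simp [Finsupp.sum]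
  have hlog : Real.log n = ∑ q ∈ n.primeFactors, (n.factorization q : ℝ) * Real.log q := by
    rw [Real.log_nat_eq_sum_factorization]
    simp [Finsupp.sum]
  have hsplit : ∑ q ∈ n.primeFactors, (n.factorization q : ℝ) * (1 - Real.log q / Real.log y) =
      ArithmeticFunction.cardFactors n - Real.log n / Real.log y := by
    rw [hΩ, hlog, Finset.sum_div, ← Finset.sum_sub_distrib]
    exact Finset.sum_congr rfl fun q _ => by ring
  have hquot : Real.log n / Real.log y ≤ 1 / β := by
    rw [div_le_div_iff₀ hlogy0 hβ, hlogy]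
    nlinarith
  have hlt : (ArithmeticFunction.cardFactors n : ℝ) < r + 1 := by linarith
  exact Nat.lt_succ_iff.mp (by exact_mod_cast hlt)

open Classical in
theorem Swt_le_card_add_card (f : ℤ[X]) {α β : ℝ} {r : ℕ} {x : ℝ} (hN : 1 < Nmax f x)
    (hβ : 0 < β) (hη : 0 < (r : ℝ) + 1 - 1 / β)
    (hpos : ∀ m ∈ Finset.Ioc ⌊x⌋₊ ⌊2 * x⌋₊, 0 < f.eval (m : ℤ)) :
    Swt f α β r x ≤
      (((Finset.Ioc ⌊x⌋₊ ⌊2 * x⌋₊).filter (fun p : ℕ => p.Prime ∧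
        ArithmeticFunction.cardFactors (f.eval (p : ℤ)).natAbs ≤ r)).card : ℝ) +
      (((Finset.Ioc ⌊x⌋₊ ⌊2 * x⌋₊).filter (fun m : ℕ => ∃ q : ℕ, q.Prime ∧
        (Nmax f x : ℝ) ^ α ≤ q ∧ (q : ℝ) < (Nmax f x : ℝ) ^ β ∧
        ((q : ℤ) ^ 2) ∣ f.eval (m : ℤ))).card : ℝ) := by
  have hN' : (1 : ℝ) < Nmax f x := by exact_mod_cast hN
  have hy : 1 < (Nmax f x : ℝ) ^ β := Real.one_lt_rpow hN' hβ
  rw [Finset.card_filter, Finset.card_filter, Nat.cast_sum, Nat.cast_sum,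
    ← Finset.sum_add_distrib]
  simp only [Swt]
  rw [Finset.sum_filter]
  refine Finset.sum_le_sum fun p hp => ?_
  split_ifs with h₁ h₂ h₃ h₃ h₂ <;> try (norm_num; done)
  all_goals
    have hnn : 0 ≤ (1 / ((r : ℝ) + 1 - 1 / β)) * ∑ q ∈ (f.eval (p : ℤ)).natAbs.primeFactors.filter
        (fun q : ℕ => (Nmax f x : ℝ) ^ α ≤ (q : ℝ) ∧ (q : ℝ) < (Nmax f x : ℝ) ^ β),
        (1 - Real.log q / Real.log ((Nmax f x : ℝ) ^ β)) := by
      refine mul_nonneg (by positivity) (Finset.sum_nonneg fun q hq => ?_)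
      obtain ⟨hq, -, hqy⟩ := Finset.mem_filter.mp hq
      have hq0 : (0 : ℝ) < q := by exact_mod_cast (Nat.prime_of_mem_primeFactors hq).pos
      rw [sub_nonneg, div_le_one (Real.log_pos hy)]
      exact Real.log_le_log hq0 hqy.le
  · push_cast; linarith
  · push_cast; linarith
  · push_cast; linarith
  · rw [Nat.cast_zero, add_zero]
    by_contra! hw
    have hfp := hpos p hp
    have hne : (f.eval (p : ℤ)).natAbs ≠ 0 := by omega
    have hle : (f.eval (p : ℤ)).natAbs ≤ Nmax f x := by
      have : (f.eval (p : ℤ)).natAbs = (f.eval (p : ℤ)).toNat := by omega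
      rw [this]
      exact Finset.le_sup (f := fun p : ℕ => (f.eval (p : ℤ)).toNat)
        (Finset.mem_filter.mpr ⟨hp, h₁.1⟩)
    have hz : ∀ q : ℕ, q.Prime → q ∣ (f.eval (p : ℤ)).natAbs → (Nmax f x : ℝ) ^ α ≤ q := by
      intro q hq hdvd
      by_contra! hlt
      have hqP : q ∣ primorialBelow ((Nmax f x : ℝ) ^ α) :=
        Finset.dvd_prod_of_mem (fun q : ℕ => q) (Finset.mem_filter.mpr
          ⟨Finset.mem_range.mpr (Nat.lt_ceil.mpr hlt), hq⟩)
      have hgcd := h₁.2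
      rw [Int.gcd_def, Int.natAbs_natCast] at hgcd
      exact hq.one_lt.ne' (Nat.dvd_one.mp (hgcd ▸ Nat.dvd_gcd hdvd hqP))
    refine h₂ ⟨h₁.1, cardFactors_le_of_weight_pos hne hN' (by exact_mod_cast hle) hβ rfl hη hz
      (fun q hq hqy hdvd => h₃ ⟨q, hq, hz q hq ((dvd_pow_self _ two_ne_zero).trans hdvd), hqy, ?_⟩)
      hw⟩
    rw [← Nat.cast_pow, Int.natCast_dvd]
    exact hdvd

theorem exists_eval_natCast_bounds {f : ℤ[X]} (hdeg : 1 ≤ f.natDegree)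
    (hlead : 0 < f.leadingCoeff) :
    ∃ c : ℝ, 0 < c ∧ ∃ A : ℝ, 0 < A ∧ ∀ᶠ m : ℕ in Filter.atTop, 0 < f.eval (m : ℤ) ∧
      c * m ≤ ((f.eval (m : ℤ) : ℤ) : ℝ) ∧ ((f.eval (m : ℤ) : ℤ) : ℝ) ≤ A * (m : ℝ) ^ f.natDegree := by
  set g := f.map (Int.castRingHom ℝ)
  have hinj : Function.Injective (Int.castRingHom ℝ) := RingHom.injective_int _
  have heval (m : ℕ) : g.eval (m : ℝ) = ((f.eval (m : ℤ) : ℤ) : ℝ) := by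
    simpa only [Int.cast_natCast, eq_intCast] using eval_intCast_map (Int.castRingHom ℝ) f (m : ℤ)
  have hnat : g.natDegree = f.natDegree := natDegree_map_eq_of_injective hinj f
  have hg : g ≠ 0 := by
    intro h
    rw [h, natDegree_zero] at hnat
    omega
  have hgdeg : g.degree = f.natDegree := by rw [degree_eq_natDegree hg, hnat]
  have hlc : 0 < g.leadingCoeff := by
    rw [leadingCoeff_map_of_injective hinj]
    simpa using hlead
  have htend := g.tendsto_atTop_of_leadingCoeff_nonneg
    (by rw [hgdeg]; exact_mod_cast hdeg) hlc.le
  have hlow : (fun x : ℝ => (X : ℝ[X]).eval x) =O[Filter.atTop] (fun x => g.eval x) :=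
    isBigO_atTop_of_degree_le _ _ (by rw [degree_X, hgdeg]; exact_mod_cast hdeg)
  have hup : (fun x : ℝ => g.eval x) =O[Filter.atTop]
      (fun x => ((X : ℝ[X]) ^ f.natDegree).eval x) :=
    isBigO_atTop_of_degree_le _ _ (by rw [degree_X_pow, hgdeg])
  obtain ⟨a, ha, hlow⟩ := hlow.exists_pos
  obtain ⟨A, hA, hup⟩ := hup.exists_pos
  refine ⟨a⁻¹, inv_pos.mpr ha, A, hA, ?_⟩
  filter_upwards [tendsto_natCast_atTop_atTop.eventually hlow.bound,
    tendsto_natCast_atTop_atTop.eventually hup.bound,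
    (htend.comp tendsto_natCast_atTop_atTop).eventually_gt_atTop 0] with m h₁ h₂ h₃
  rw [Function.comp_apply, heval] at h₃
  simp only [eval_X, eval_pow, heval, Real.norm_eq_abs, abs_of_pos h₃, Nat.abs_cast,
    abs_pow] at h₁ h₂
  exact ⟨by exact_mod_cast h₃, (inv_mul_le_iff₀ ha).mpr h₁, h₂⟩

theorem exists_Nmax_bounds {f : ℤ[X]} (hdeg : 1 ≤ f.natDegree) (hlead : 0 < f.leadingCoeff) :
    ∃ c : ℝ, 0 < c ∧ ∃ A : ℝ, 0 < A ∧ ∀ᶠ x : ℝ in Filter.atTop,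
      c * x ≤ Nmax f x ∧ (Nmax f x : ℝ) ≤ A * x ^ f.natDegree ∧
      ∀ m ∈ Finset.Ioc ⌊x⌋₊ ⌊2 * x⌋₊, 0 < f.eval (m : ℤ) := by
  obtain ⟨c, hc, A, hA, h⟩ := exists_eval_natCast_bounds hdeg hlead
  obtain ⟨M, hM⟩ := Filter.eventually_atTop.mp h
  refine ⟨c, hc, A * 2 ^ f.natDegree, by positivity, ?_⟩
  filter_upwards [Filter.eventually_ge_atTop (M : ℝ), Filter.eventually_ge_atTop 1] with x hxM hx
  have hmem (m : ℕ) (hm : m ∈ Finset.Ioc ⌊x⌋₊ ⌊2 * x⌋₊) : x < m ∧ (m : ℝ) ≤ 2 * x ∧ M ≤ m := by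
    obtain ⟨h₁, h₂⟩ := Finset.mem_Ioc.mp hm
    have h₃ : x < m := (Nat.floor_lt (by linarith)).mp h₁
    exact ⟨h₃, (Nat.le_floor_iff (by linarith)).mp h₂, by exact_mod_cast hxM.trans h₃.le⟩
  have htoNat (m : ℕ) (hm : M ≤ m) : ((f.eval (m : ℤ)).toNat : ℝ) = ((f.eval (m : ℤ) : ℤ) : ℝ) := by
    exact_mod_cast congrArg (Int.cast : ℤ → ℝ) (Int.toNat_of_nonneg (hM m hm).1.le)
  obtain ⟨p, hp, hxp, hpx⟩ :=
    Nat.exists_prime_lt_and_le_two_mul ⌊x⌋₊ (Nat.floor_pos.mpr hx).ne'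
  have hp_mem : p ∈ (Finset.Ioc ⌊x⌋₊ ⌊2 * x⌋₊).filter Nat.Prime := by
    refine Finset.mem_filter.mpr ⟨Finset.mem_Ioc.mpr ⟨hxp, hpx.trans (Nat.le_floor ?_)⟩, hp⟩
    push_cast
    linarith [Nat.floor_le (show 0 ≤ x by linarith)]
  refine ⟨?_, ?_, fun m hm => (hM m (hmem m hm).2.2).1⟩
  · obtain ⟨h₁, -, h₂⟩ := hmem p (Finset.mem_filter.mp hp_mem).1
    calc c * x ≤ c * p := by gcongr
      _ ≤ ((f.eval (p : ℤ) : ℤ) : ℝ) := (hM p h₂).2.1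
      _ = ((f.eval (p : ℤ)).toNat : ℝ) := (htoNat p h₂).symm
      _ ≤ Nmax f x := by
        exact_mod_cast Finset.le_sup (f := fun p : ℕ => (f.eval (p : ℤ)).toNat) hp_mem
  · obtain ⟨m, hm, hmax⟩ := Finset.exists_mem_eq_sup _ ⟨p, hp_mem⟩
      (fun p : ℕ => (f.eval (p : ℤ)).toNat)
    obtain ⟨-, h₁, h₂⟩ := hmem m (Finset.mem_filter.mp hm).1
    calc (Nmax f x : ℝ) = ((f.eval (m : ℤ)).toNat : ℝ) := by exact_mod_cast hmax
      _ = ((f.eval (m : ℤ) : ℤ) : ℝ) := htoNat m h₂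
      _ ≤ A * (m : ℝ) ^ f.natDegree := (hM m h₂).2.2
      _ ≤ A * (2 * x) ^ f.natDegree := by gcongr
      _ = _ := by rw [mul_pow]; ring

theorem isLittleO_rpow_div_log_sq {s : ℝ} (hs : s < 1) :
    (fun x : ℝ => x ^ s) =o[Filter.atTop] (fun x : ℝ => x / Real.log x ^ 2) := by
  have h₁ : (fun x : ℝ => Real.log x ^ (2 : ℝ)) =o[Filter.atTop] (fun x : ℝ => x ^ (1 - s)) :=
    isLittleO_log_rpow_rpow_atTop 2 (by linarith)
  have h₂ := (Asymptotics.isBigO_refl (fun x : ℝ => x ^ s / Real.log x ^ 2)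
    Filter.atTop).mul_isLittleO h₁
  refine h₂.congr' ?_ ?_
  · filter_upwards [Filter.eventually_gt_atTop 1] with x hx
    have := Real.log_pos hx
    rw [Real.rpow_two]
    field_simp
  · filter_upwards [Filter.eventually_gt_atTop 1] with x hx
    rw [div_mul_eq_mul_div, ← Real.rpow_add (by linarith), add_sub_cancel, Real.rpow_one]

theorem weighted_sieve_lemma (f : Polynomial ℤ) (k : ℕ) (hdeg : f.natDegree = k)
    (hk : 1 ≤ k) (hirr : Irreducible f) (hlead : 0 < f.leadingCoeff)
    (hconst : f.coeff 0 ≠ 0) (r : ℕ) (hr : 0 < r) (α β : ℝ)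
    (hα : 0 < α) (hαβ : α < β) (hβ : β < 1 / k) (hβr : 1 / (r + 1 : ℝ) < β)
    (hS : ∃ C : ℝ, 0 < C ∧ ∃ x₀ : ℝ, ∀ x : ℝ, x₀ ≤ x →
      C * (x / (Real.log x) ^ 2) ≤ Swt f α β r x) :
    ∃ C' : ℝ, 0 < C' ∧ ∃ x₁ : ℝ, ∀ x : ℝ, x₁ ≤ x →
      C' * (x / (Real.log x) ^ 2) ≤
        (((Finset.Ioc ⌊x⌋₊ ⌊2 * x⌋₊).filter
          (fun p : ℕ => p.Prime ∧
            ArithmeticFunction.cardFactors (f.eval (p : ℤ)).natAbs ≤ r)).card : ℝ) := by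
  classical
  subst hdeg
  obtain ⟨C, hC, x₀, hS⟩ := hS
  have hβ0 : 0 < β := hα.trans hαβ
  have hη : 0 < (r : ℝ) + 1 - 1 / β := by
    rw [sub_pos, div_lt_comm₀ hβ0 (by positivity)]
    exact hβr
  have hkβ : (f.natDegree : ℝ) * β < 1 := by
    rwa [lt_div_iff₀ (by exact_mod_cast hk), mul_comm] at hβ
  obtain ⟨Q, hQ⟩ := hirr.exists_forall_prime_not_dvd_eval_derivative (by omega)
  obtain ⟨c, hc, A, hA, hN⟩ := exists_Nmax_bounds hk hlead
  have hsmall : (fun x : ℝ => f.natDegree * (4 * (c ^ α)⁻¹ * x ^ (1 - α) +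
      A ^ β * x ^ (f.natDegree * β) + x ^ (0 : ℝ))) =o[Filter.atTop]
        (fun x : ℝ => x / Real.log x ^ 2) :=
    ((((isLittleO_rpow_div_log_sq (by linarith)).const_mul_left _).add
      ((isLittleO_rpow_div_log_sq hkβ).const_mul_left _)).add
        (isLittleO_rpow_div_log_sq one_pos)).const_mul_left _
  have hz_tend : Filter.Tendsto (fun x : ℝ => (c * x) ^ α) Filter.atTop Filter.atTop :=
    (tendsto_rpow_atTop hα).comp (Filter.tendsto_id.const_mul_atTop hc)
  refine ⟨C / 2, half_pos hC, Filter.eventually_atTop.mp ?_⟩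
  filter_upwards [hN, hsmall.bound (half_pos hC), hz_tend.eventually_gt_atTop (Q : ℝ),
    hz_tend.eventually_ge_atTop 1, Filter.eventually_gt_atTop c⁻¹,
    Filter.eventually_gt_atTop 1, Filter.eventually_ge_atTop x₀]
    with x ⟨hNl, hNu, hpos⟩ hsm hzQ hz1 hxc hx hx₀
  have hx0 : 0 < x := by linarith
  have hcx : 1 < c * x := by
    have := mul_lt_mul_of_pos_left hxc hc
    rwa [mul_inv_cancel₀ hc.ne'] at this
  have hN1 : (1 : ℝ) < Nmax f x := hcx.trans_le hNl
  have hz : (c * x) ^ α ≤ (Nmax f x : ℝ) ^ α := Real.rpow_le_rpow (by linarith) hNl hα.le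
  have hy : (Nmax f x : ℝ) ^ β ≤ A ^ β * x ^ (f.natDegree * β) := by
    refine (Real.rpow_le_rpow (by linarith) hNu hβ0.le).trans_eq ?_
    rw [Real.mul_rpow hA.le (by positivity), Real.rpow_mul hx0.le, Real.rpow_natCast]
  have hweight := Swt_le_card_add_card f (α := α) (by exact_mod_cast hN1) hβ0 hη hpos
  have hab : ⌊x⌋₊ ≤ ⌊2 * x⌋₊ := Nat.floor_le_floor (by linarith)
  have hbad := card_filter_Ioc_exists_sq_dvd_eval_le (f := f) (hz1.trans hz)
    (Real.rpow_nonneg (Nat.cast_nonneg (Nmax f x)) β)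
    (fun q hq => hQ q (by exact_mod_cast hzQ.trans_le (hz.trans hq))) hab
  have hlen : 2 * ((⌊2 * x⌋₊ : ℝ) - ⌊x⌋₊) / (Nmax f x : ℝ) ^ α ≤
      4 * (c ^ α)⁻¹ * x ^ (1 - α) := by
    have h₁ := Nat.floor_le (show 0 ≤ 2 * x by linarith)
    have h₂ := Nat.lt_floor_add_one x
    calc 2 * ((⌊2 * x⌋₊ : ℝ) - ⌊x⌋₊) / (Nmax f x : ℝ) ^ α ≤ 4 * x / (c * x) ^ α := by
          have h₃ : 2 * ((⌊2 * x⌋₊ : ℝ) - ⌊x⌋₊) ≤ 4 * x := by linarith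
          gcongr
      _ = 4 * (c ^ α)⁻¹ * x ^ (1 - α) := by
          rw [Real.mul_rpow hc.le hx0.le, Real.rpow_sub hx0, Real.rpow_one]
          have := Real.rpow_pos_of_pos hx0 α
          have := Real.rpow_pos_of_pos hc α
          field_simp
  have hsm' : f.natDegree * (2 * ((⌊2 * x⌋₊ : ℝ) - ⌊x⌋₊) / (Nmax f x : ℝ) ^ α +
      (Nmax f x : ℝ) ^ β + 1) ≤ C / 2 * (x / Real.log x ^ 2) := by
    rw [Real.norm_of_nonneg (show 0 ≤ x / Real.log x ^ 2 by positivity)] at hsm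
    refine le_trans ?_ ((le_abs_self _).trans hsm)
    rw [Real.rpow_zero]
    gcongr
  linarith [hS x hx₀]
end
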